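/- Let X = L ∪ J ∪ R be a continuum in the class 𝒞 such that L and R are nondegenerate and L ∩ R ≠ ∅. Then 𝓜(X) is the disjoint union of 𝓜(L ∪ R) and 𝓜(J): a set M belongs to 𝓜(X) if and only if M ∈ 𝓜(L ∪ R) or M ∈ 𝓜(J), and no set belongs to both systems. Moreover, 𝓜(J) is exactly the system of all subsets of J that are nonempty finite sets or Cantor sets. -/

import Mathlib

/-!
Write `K = L ∪ R`, the complement of the free interval `J`. The class `𝒞` gives a coordinate
`q : ℝ → X` on `J` such that the ends `t → ∞` and `t → -∞` accumulate exactly at `L` and at `R`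
(`ClassC.exists_coordinates`).

*No crossing* (`no_crossing`). A continuous map from a connected, locally connected space into `X`
has its image inside `J` or inside `K`: a small connected piece of the image touching both `J` and
`K` would contain a whole end of `J`, and so would be close to all of `L` or all of `R`, although
these are nondegenerate. For a continuous `f : X → X` this applies to `L`, `R` and `J`, and as
`L ∩ R` is nonempty, `K` goes into `K` or into `J`. It follows that a minimal set of `f` lies in `J`
or in `K` (`minimal_dichotomy`).

*Extending maps.* A compact subset of `J` with dynamics on it extends to `X` by Tietze's theorem,
because `J` is a line (`exists_extension`). For `K` there is a retraction `X → K`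
(`exists_retraction`): each end of `J` is asymptotic to a ray inside the Peano continuum `L` or `R`
(`exists_asymptotic_ray`, resting on the uniform local path connectedness
`exists_small_path`), and the two rays can be joined in the path connected set `K`. Hence `𝓜(X)` is
the union of `𝓜(K)` and `𝓜(J)`, and the two are disjoint because `K` and `J` are.

*Minimal sets in a line.* Let `M ⊆ J` be minimal. A periodic point makes `M` finite, and an isolated
point is periodic. A nondegenerate component of `M` is an interval which returns into itself, so it
contains a periodic point (`IsMinimalMap.finite_or_cantor`). Thus `M` is finite or a Cantor set.
Conversely a finite set carries a cyclic permutation and a Cantor set the dyadic adding machine,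
built from refining clopen partitions into `2 ^ n` pieces (`exists_minimal_of_cantor`).
-/


open Set Topology

/-- A topological space has no isolated points if no singleton is open. -/
def NoIsolatedPoints (Y : Type*) [TopologicalSpace Y] : Prop :=
  ∀ y : Y, ¬ IsOpen ({y} : Set Y)

/-- `(M, f|_M)` is a minimal dynamical system with `f(M) = M`:
`M` is nonempty, `f(M) = M`, and `M` has no nonempty proper closed subset
invariant under `f|_M`. -/
def MinimalSystemOn {Y : Type*} [TopologicalSpace Y] (f : Y → Y) (M : Set Y) : Prop :=
  M.Nonempty ∧ f '' M = M ∧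
    ∀ N, N ⊆ M → N.Nonempty → IsClosed N → f '' N ⊆ N → N = M

/-- The system `𝓜(Y)` of all compact sets `M ⊆ Y` such that there is a continuous
`f : Y → Y` with `f(M) = M` and `(M, f|_M)` a minimal dynamical system. -/
def MSpace (Y : Type*) [TopologicalSpace Y] : Set (Set Y) :=
  {M | IsCompact M ∧ ∃ f : Y → Y, Continuous f ∧ MinimalSystemOn f M}

/-- `𝓜(Z)` for a subspace `Z ⊆ X` (carrying the subspace topology),
viewed as a system of subsets of `X`. -/
def MSetIn {X : Type*} [TopologicalSpace X] (Z : Set X) : Set (Set X) :=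
  {M | ∃ M' ∈ MSpace (↥Z), M = Subtype.val '' M'}

/-- `𝓜*(L; R)`: members of `𝓜(L ∪ R)` (`= 𝓜(L ⊔ R)` for disjoint `L, R`) such that
`M ∩ L` and `M ∩ R` have the same cardinality. -/
def MStarIn {X : Type*} [TopologicalSpace X] (L R : Set X) : Set (Set X) :=
  {M | M ∈ MSetIn (L ∪ R) ∧ Cardinal.mk ↥(M ∩ L) = Cardinal.mk ↥(M ∩ R)}

/-- An arc: a set homeomorphic to `[0,1]`. -/
def IsArc {X : Type*} [TopologicalSpace X] (A : Set X) : Prop :=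
  Nonempty (↥A ≃ₜ ↥(Set.Icc (0:ℝ) 1))

/-- A ray: a set homeomorphic to `[0,∞)`. -/
def IsRaySet {X : Type*} [TopologicalSpace X] (A : Set X) : Prop :=
  Nonempty (↥A ≃ₜ ↥(Set.Ici (0:ℝ)))

/-- A Cantor set: nonempty, compact, totally disconnected, without isolated points
(metrizability is inherited from the ambient space). -/
def IsCantorSet {X : Type*} [TopologicalSpace X] (M : Set X) : Prop :=
  M.Nonempty ∧ IsCompact M ∧ IsTotallyDisconnected M ∧ NoIsolatedPoints ↥M

/-- A circle: a set homeomorphic to the unit circle `S¹ ⊆ ℂ`. -/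
def IsCircleSet {X : Type*} [TopologicalSpace X] (C : Set X) : Prop :=
  Nonempty (↥C ≃ₜ ↥(Metric.sphere (0:ℂ) 1))

/-- A cantoroid: a nonempty compact (metrizable) set without isolated points in which
the union of the degenerate (singleton) connected components is dense. -/
def IsCantoroid {X : Type*} [TopologicalSpace X] (M : Set X) : Prop :=
  M.Nonempty ∧ IsCompact M ∧ NoIsolatedPoints ↥M ∧
    Dense {x : ↥M | connectedComponent x = {x}}

/-- A union of finitely many (at least one) pairwise disjoint circles. -/
def FinUnionDisjCircles {X : Type*} [TopologicalSpace X] (M : Set X) : Prop :=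
  ∃ (n : ℕ) (C : Fin n → Set X), 0 < n ∧ (∀ i, IsCircleSet (C i)) ∧
    Pairwise (Function.onFun Disjoint C) ∧ M = ⋃ i, C i

/-- A local dendrite: a locally connected continuum containing only finitely many circles. -/
def IsLocalDendrite {X : Type*} [TopologicalSpace X] (L : Set X) : Prop :=
  IsCompact L ∧ IsConnected L ∧ LocallyConnectedSpace ↥L ∧
    {C : Set X | C ⊆ L ∧ IsCircleSet C}.Finite

/-- The decomposition `X = L ∪ J ∪ R` witnessing that the continuum `X` belongs to the
class `𝒞`: `J` is a free interval dense in `X`; `L` and `R` are locally connected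
subcontinua of `X` disjoint from `J`; and there are rays `J_L, J_R` with
`J = J_L ∪ J_R` such that `L ∪ J_L` is a compactification of `J_L` and `R ∪ J_R` is a
compactification of `J_R`. -/
structure ClassC {X : Type*} [TopologicalSpace X] (L J R : Set X) : Prop where
  union_eq : L ∪ J ∪ R = Set.univ
  openJ : IsOpen J
  freeJ : Nonempty (↥J ≃ₜ ↥(Set.Ioo (0:ℝ) 1))
  denseJ : Dense J
  compactL : IsCompact L
  connL : IsConnected L
  locConnL : LocallyConnectedSpace ↥L
  compactR : IsCompact R
  connR : IsConnected R
  locConnR : LocallyConnectedSpace ↥R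
  disjLJ : Disjoint L J
  disjRJ : Disjoint R J
  rays : ∃ JL JR : Set X, JL ∪ JR = J ∧ IsRaySet JL ∧ IsRaySet JR ∧
    IsCompact (L ∪ JL) ∧ L ∪ JL ⊆ closure JL ∧
    IsCompact (R ∪ JR) ∧ R ∪ JR ⊆ closure JR

/-! ### Uniform local path connectedness -/

/-- Dependent choice: an invariant `G` and a relation `R` between consecutive terms. -/
theorem exists_dependent_seq {α : Type*} (G : ℕ → α → Prop) (R : ℕ → α → α → Prop)
    {a : α} (ha : G 0 a) (hs : ∀ n a, G n a → ∃ b, G (n + 1) b ∧ R n a b) :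
    ∃ s : ℕ → α, s 0 = a ∧ ∀ n, G n (s n) ∧ R n (s n) (s (n + 1)) := by
  choose! nxt hn using hs
  let s : ℕ → α := fun n => Nat.rec a (fun n b => nxt n b) n
  have hG : ∀ n, G n (s n) := fun n => by
    induction n with
    | zero => exact ha
    | succ n ih => exact (hn n _ ih).1
  exact ⟨s, rfl, fun n => ⟨hG n, (hn n _ (hG n)).2⟩⟩

section Peano

variable {A : Type*} [MetricSpace A]

/-- In a preconnected set any two points are joined, for every `η > 0`, by a finite chain of points
of the set with steps shorter than `η`. -/
theorem IsPreconnected.exists_chain {C : Set A} (hC : IsPreconnected C) {η : ℝ} (hη : 0 < η)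
    {x y : A} (hx : x ∈ C) (hy : y ∈ C) :
    ∃ (n : ℕ) (c : ℕ → A), c 0 = x ∧ (∀ j ≥ n, c j = y) ∧ (∀ j, c j ∈ C) ∧
      ∀ j, dist (c j) (c (j + 1)) < η := by
  have base : ∀ a ∈ C, ∀ b ∈ C, dist a b < η →
      ∃ (n : ℕ) (c : ℕ → A), c 0 = a ∧ (∀ j ≥ n, c j = b) ∧ (∀ j, c j ∈ C) ∧
      ∀ j, dist (c j) (c (j + 1)) < η := by
    intro a ha b hb hab
    refine ⟨1, fun j => if j = 0 then a else b, by simp, ?_, ?_, ?_⟩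
    · intro j hj
      have : j ≠ 0 := by omega
      simp [this]
    · intro j
      dsimp only
      split_ifs <;> assumption
    · intro j
      rcases Nat.eq_zero_or_pos j with rfl | h
      · simpa using hab
      · simp [h.ne', hη]
  refine hC.induction₂' (fun a b => ∃ (n : ℕ) (c : ℕ → A), c 0 = a ∧ (∀ j ≥ n, c j = b) ∧
    (∀ j, c j ∈ C) ∧ ∀ j, dist (c j) (c (j + 1)) < η) ?_ ?_ hx hy
  · intro a ha
    filter_upwards [self_mem_nhdsWithin, mem_nhdsWithin_of_mem_nhds (Metric.ball_mem_nhds a hη)]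
      with b hb hab
    exact ⟨base a ha b hb (by rwa [dist_comm]), base b hb a ha hab⟩
  · rintro a b d - - - ⟨n, c, c0, cn, cC, cd⟩ ⟨n', c', c0', cn', cC', cd'⟩
    refine ⟨n + n', fun j => if j < n then c j else c' (j - n), ?_, ?_, ?_, ?_⟩
    · rcases Nat.eq_zero_or_pos n with rfl | h
      · simp [c0', ← c0, cn 0 le_rfl]
      · simp [h, c0]
    · intro j hj
      have : ¬ j < n := by omega
      simp only [this, if_false]
      exact cn' _ (by omega)
    · intro j
      dsimp only
      split_ifs
      exacts [cC _, cC' _]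
    · intro j
      dsimp only
      by_cases h : j + 1 < n
      · simpa [h, (by omega : j < n)] using cd j
      · by_cases h' : j < n
        · have e : j + 1 - n = 0 := by omega
          simp only [h, h', if_true, if_false, e, c0', ← cn (j + 1) (by omega)]
          exact cd j
        · have e : j + 1 - n = j - n + 1 := by omega
          simp only [h, h', if_false, e]
          exact cd' _

/-- One refinement step: a `δ`-chain is refined to a `δ'`-chain, each link being
subdivided into the same number `m` of links. -/
theorem exists_refinement {ε δ δ' : ℝ} (hδ' : 0 < δ')
    (h : ∀ x y : A, dist x y < δ → ∀ η > 0, ∃ (n : ℕ) (c : ℕ → A), c 0 = x ∧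
      (∀ j ≥ n, c j = y) ∧ (∀ j, dist (c j) x < ε) ∧ ∀ j, dist (c j) (c (j + 1)) < η)
    (hε : 0 < ε) (N : ℕ) (u : ℕ → A) {b : A} (hN : ∀ i ≥ N, u i = b)
    (hu : ∀ i, dist (u i) (u (i + 1)) < δ) :
    ∃ (m : ℕ) (v : ℕ → A), 0 < m ∧ v 0 = u 0 ∧ (∀ i ≥ N * m, v i = b) ∧
      (∀ i, dist (v i) (v (i + 1)) < δ') ∧ ∀ k, dist (u (k / m)) (v k) < ε := by
  have H : ∀ i, ∃ (n : ℕ) (c : ℕ → A), c 0 = u i ∧ (∀ j ≥ n, c j = u (i + 1)) ∧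
      (∀ j, dist (c j) (u i) < ε) ∧ (∀ j, dist (c j) (c (j + 1)) < δ') ∧
      (u i = u (i + 1) → n = 0) := by
    intro i
    by_cases e : u i = u (i + 1)
    · exact ⟨0, fun _ => u i, rfl, fun _ _ => e, by simpa using hε, by simpa using hδ', by simp⟩
    · obtain ⟨n, c, h1, h2, h3, h4⟩ := h _ _ (hu i) δ' hδ'
      exact ⟨n, c, h1, h2, h3, h4, fun e' => absurd e' e⟩
  choose n c c0 cn cε cδ ce using H
  set m := (Finset.range N).sup n + 1 with hm
  have hnm : ∀ i, n i ≤ m := by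
    intro i
    by_cases hi : i < N
    · exact (Finset.le_sup (f := n) (Finset.mem_range.2 hi)).trans (Nat.le_succ _)
    · rw [ce i (by rw [hN i (by omega), hN (i + 1) (by omega)])]
      exact Nat.zero_le _
  have hm0 : 0 < m := Nat.succ_pos _
  refine ⟨m, fun k => c (k / m) (k % m), hm0, by simp [c0], ?_, ?_, ?_⟩
  · intro k hk
    have hk' : N ≤ k / m := (Nat.le_div_iff_mul_le hm0).2 hk
    have h0 : n (k / m) = 0 := ce _ (by rw [hN _ hk', hN _ (by omega)])
    dsimp only
    rw [cn _ _ (by omega), hN _ (by omega)]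
  · intro k
    have hlt := Nat.mod_lt k hm0
    have key : c ((k + 1) / m) ((k + 1) % m) = c (k / m) (k % m + 1) := by
      have hk := Nat.div_add_mod k m
      by_cases hc : k % m + 1 = m
      · have e : k + 1 = m * (k / m + 1) := by rw [Nat.mul_succ]; omega
        rw [e, Nat.mul_div_cancel_left _ hm0, Nat.mul_mod_right, c0, hc, cn _ _ (hnm _)]
      · have e : k + 1 = (k % m + 1) + m * (k / m) := by omega
        have h1 : (k + 1) / m = k / m := by
          rw [e, Nat.add_mul_div_left _ _ hm0, Nat.div_eq_of_lt (by omega), zero_add]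
        have h2 : (k + 1) % m = k % m + 1 := by
          rw [e, Nat.add_mul_mod_self_left, Nat.mod_eq_of_lt (by omega)]
        rw [h1, h2]
    dsimp only
    rw [key]
    exact cδ _ _
  · intro k
    rw [dist_comm]
    exact cε _ _

variable [CompactSpace A] [LocallyConnectedSpace A]

/-- Uniform local connectedness of a compact locally connected space, phrased with chains. -/
theorem exists_uniform_chain {ε : ℝ} (hε : 0 < ε) :
    ∃ δ > 0, ∀ x y : A, dist x y < δ → ∀ η > 0, ∃ (n : ℕ) (c : ℕ → A), c 0 = x ∧
      (∀ j ≥ n, c j = y) ∧ (∀ j, dist (c j) x < ε) ∧ ∀ j, dist (c j) (c (j + 1)) < η := by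
  obtain ⟨δ, hδ, h⟩ := lebesgue_number_lemma_of_metric (s := (univ : Set A))
    (c := fun z : A => connectedComponentIn (Metric.ball z (ε / 2)) z) isCompact_univ
    (fun z => Metric.isOpen_ball.connectedComponentIn)
    (fun z _ => mem_iUnion.2 ⟨z, mem_connectedComponentIn (Metric.mem_ball_self (by linarith))⟩)
  refine ⟨δ, hδ, fun x y hxy η hη => ?_⟩
  obtain ⟨z, hz⟩ := h x (mem_univ x)
  obtain ⟨n, c, h0, hn, hc, hd⟩ := isPreconnected_connectedComponentIn.exists_chain hη
    (hz (Metric.mem_ball_self hδ)) (hz (by rwa [Metric.mem_ball, dist_comm]))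
  refine ⟨n, c, h0, hn, fun j => ?_, hd⟩
  have h1 := connectedComponentIn_subset _ _ (hc j)
  have h2 := connectedComponentIn_subset _ _ (hc 0)
  rw [h0] at h2
  rw [Metric.mem_ball] at h1 h2
  linarith [dist_triangle_right (c j) x z]

/-- Uniform local path connectedness of compact locally connected metric spaces: nearby points are
joined by small paths. -/
theorem exists_small_path {ε : ℝ} (hε : 0 < ε) :
    ∃ δ > 0, ∀ x y : A, dist x y < δ → ∃ γ : ℝ → A, Continuous γ ∧ (∀ t ≤ 0, γ t = x) ∧
      (∀ t ≥ 1, γ t = y) ∧ ∀ t, dist (γ t) x < ε := by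
  set e : ℕ → ℝ := fun n => ε / 2 / 2 / 2 ^ n with he
  have hepos : ∀ n, 0 < e n := fun n => by positivity
  have hδex : ∀ n, ∃ δ > 0, δ ≤ e n ∧ ∀ x y : A, dist x y < δ → ∀ η > 0,
      ∃ (n' : ℕ) (c : ℕ → A), c 0 = x ∧
      (∀ j ≥ n', c j = y) ∧ (∀ j, dist (c j) x < e n) ∧ ∀ j, dist (c j) (c (j + 1)) < η := by
    intro n
    obtain ⟨δ, h1, h2⟩ := exists_uniform_chain (A := A) (hepos n)
    exact ⟨min δ (e n), lt_min h1 (hepos n), min_le_right _ _,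
      fun x y hxy => h2 x y (hxy.trans_le (min_le_left _ _))⟩
  choose δ δpos δle hδ using hδex
  refine ⟨δ 0, δpos 0, fun x y hxy => ?_⟩
  obtain ⟨s, hs0, hs⟩ := exists_dependent_seq (α := ℕ × (ℕ → A))
    (fun n p => 0 < p.1 ∧ p.2 0 = x ∧ (∀ i ≥ p.1, p.2 i = y) ∧
      ∀ i, dist (p.2 i) (p.2 (i + 1)) < δ n)
    (fun n p p' => ∃ m, 0 < m ∧ p'.1 = p.1 * m ∧ ∀ k, dist (p.2 (k / m)) (p'.2 k) < e n)
    (a := (1, fun i => if i = 0 then x else y))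
    ⟨one_pos, by simp, fun i hi => by
        have : i ≠ 0 := by dsimp only at hi; omega
        simp [this], fun i => by
        rcases Nat.eq_zero_or_pos i with rfl | h
        · simpa using hxy
        · simp [h.ne', δpos]⟩
    (by
      rintro n ⟨N, u⟩ ⟨h1, h2, h3, h4⟩
      obtain ⟨m, v, hm, v0, vN, vd, ve⟩ := exists_refinement (δpos (n + 1)) (hδ n) (hepos n) N u h3 h4
      exact ⟨(N * m, v), ⟨Nat.mul_pos h1 hm, v0.trans h2, vN, vd⟩, m, hm, rfl, ve⟩)
  -- `g n` is the step function on `ℝ` running through the `n`-th chain on `[0, 1]`; the sequence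
  -- converges uniformly.
  set g : ℕ → ℝ → A := fun n t => (s n).2 ⌊((s n).1 : ℝ) * t⌋₊ with hg
  have hstep : ∀ t n, dist (g n t) (g (n + 1) t) ≤ ε / 2 / 2 / 2 ^ n := by
    intro t n
    obtain ⟨-, m, hm, hN, hd⟩ := hs n
    have hm' : (m : ℝ) ≠ 0 := by positivity
    have := hd ⌊((s (n + 1)).1 : ℝ) * t⌋₊
    rw [← Nat.floor_div_natCast, hN, Nat.cast_mul,
      show ((s n).1 : ℝ) * m * t / m = (s n).1 * t by field_simp, ← Nat.cast_mul, ← hN] at this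
    exact this.le
  have hlim : ∀ t, ∃ a, Filter.Tendsto (fun n => g n t) Filter.atTop (𝓝 a) := fun t =>
    cauchySeq_tendsto_of_complete (cauchySeq_of_le_geometric_two (hstep t))
  choose γ hγ using hlim
  have hclose : ∀ t n, dist (g n t) (γ t) ≤ ε / 2 / 2 ^ n := fun t n =>
    dist_le_of_le_geometric_two_of_tendsto (hstep t) (hγ t) n
  refine ⟨γ, ?_, ?_, ?_, ?_⟩
  · rw [Metric.continuous_iff]
    intro t η hη
    obtain ⟨n, hn⟩ : ∃ n : ℕ, ε / 2 / 2 ^ n < η / 3 := by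
      obtain ⟨n, hn⟩ := exists_pow_lt_of_lt_one (show 0 < η / 3 / (ε / 2) by positivity)
        (show (1 / 2 : ℝ) < 1 by norm_num)
      refine ⟨n, ?_⟩
      rw [lt_div_iff₀ (by positivity)] at hn
      rw [one_div, inv_pow] at hn
      rw [div_eq_inv_mul _ ((2 : ℝ) ^ n)]
      exact hn
    have hNpos : (0 : ℝ) < (s n).1 := by exact_mod_cast (hs n).1.1
    refine ⟨1 / (s n).1, by positivity, fun r hr => ?_⟩
    -- A parameter change by less than one link length moves the index by at most one.
    have hj : dist (g n r) (g n t) < ε / 2 / 2 ^ n := by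
      have hb : δ n < ε / 2 / 2 ^ n := by
        have := δle n
        have h2 := hepos n
        have : e n = ε / 2 / 2 ^ n / 2 := by simp only [he]; ring
        linarith
      have hd := (hs n).1.2.2.2
      rw [Real.dist_eq, lt_div_iff₀ hNpos, ← abs_of_pos hNpos, ← abs_mul, abs_lt] at hr
      have key : ∀ a b : ℝ, a ≤ b → b < a + 1 → ⌊b⌋₊ = ⌊a⌋₊ ∨ ⌊b⌋₊ = ⌊a⌋₊ + 1 := by
        intro a b h1 h2
        have h3 := Nat.floor_mono h1
        have h4 : ⌊b⌋₊ < ⌊a⌋₊ + 2 := by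
          rcases lt_or_ge b 0 with hb | hb
          · rw [Nat.floor_of_nonpos hb.le]; omega
          · rw [Nat.floor_lt hb]
            push_cast
            linarith [Nat.lt_floor_add_one a]
        omega
      have key2 : ∀ a b : ℝ, a ≤ b → b < a + 1 →
          dist ((s n).2 ⌊a⌋₊) ((s n).2 ⌊b⌋₊) < ε / 2 / 2 ^ n := by
        intro a b h1 h2
        rcases key a b h1 h2 with h | h <;> rw [h]
        · rw [dist_self]; positivity
        · exact (hd _).trans hb
      rcases le_total ((s n).1 * r) ((s n).1 * t) with h | h
      · exact key2 _ _ h (by linarith)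
      · rw [dist_comm]; exact key2 _ _ h (by linarith)
    have h1 := hclose r n
    have h2 := hclose t n
    have h3 := dist_triangle4 (γ r) (g n r) (g n t) (γ t)
    rw [dist_comm (γ r) (g n r)] at h3
    linarith
  · intro t ht
    refine tendsto_nhds_unique (hγ t) (tendsto_const_nhds.congr fun n => ?_)
    simp only [hg]
    rw [Nat.floor_of_nonpos (mul_nonpos_of_nonneg_of_nonpos (Nat.cast_nonneg _) ht), (hs n).1.2.1]
  · intro t ht
    refine tendsto_nhds_unique (hγ t) (tendsto_const_nhds.congr fun n => ?_)
    simp only [hg]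
    rw [(hs n).1.2.2.1]
    exact Nat.le_floor (le_mul_of_one_le_right (Nat.cast_nonneg _) ht)
  · intro t
    have h1 := hclose t 0
    have h2 : dist (g 0 t) x ≤ ε / 4 := by
      simp only [hg, hs0]
      split_ifs
      · rw [dist_self]; positivity
      · rw [dist_comm]
        have := δle 0
        simp only [he, pow_zero] at this
        linarith
    have h3 := dist_triangle_left (γ t) x (g 0 t)
    simp only [pow_zero] at h1
    linarith

end Peano

/-! ### Asymptotic rays -/

section Ray

variable {X : Type*} [MetricSpace X] {L : Set X} {q : ℝ → X}

/-- Along a ray converging to a compact locally connected set `L`, any selection `y` of points of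
`L` close to the ray can be interpolated, on intervals far enough, by paths in `L` which stay
close to the ray. -/
theorem exists_segment_approx [CompactSpace L] [LocallyConnectedSpace L] (hqc : Continuous q)
    {y : ℝ → L} (hy : ∀ ε > 0, ∃ T, ∀ t ≥ T, dist (q t) (y t) < ε) {ε : ℝ} (hε : 0 < ε) :
    ∃ T, ∀ a b, T ≤ a → a ≤ b → ∃ v : ℝ → L, Continuous v ∧ v a = y a ∧ v b = y b ∧
      ∀ r ∈ Icc a b, dist (q r) (v r) < ε := by
  obtain ⟨δ, hδ, hpath⟩ := exists_small_path (A := L) (show 0 < ε / 3 by positivity)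
  set η := min (δ / 3) (ε / 3) with hη
  have hη0 : 0 < η := lt_min (by positivity) (by positivity)
  have hη1 : η ≤ δ / 3 := min_le_left _ _
  have hη2 : η ≤ ε / 3 := min_le_right _ _
  obtain ⟨T, hT⟩ := hy η hη0
  refine ⟨T, fun a b hTa hab => ?_⟩
  have short : ∀ s t, T ≤ s → s ≤ t → (∀ r ∈ Icc s t, dist (q r) (q s) < η) →
      ∃ v : ℝ → L, Continuous v ∧ v s = y s ∧ v t = y t ∧
      ∀ r ∈ Icc s t, dist (q r) (v r) < ε := by
    intro s t hs hst hr
    have hyst : dist (y s) (y t) < δ := by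
      have h1 := hT s hs
      have h2 := hT t (hs.trans hst)
      have h3 := hr t ⟨hst, le_rfl⟩
      have h4 := dist_triangle4 (y s : X) (q s) (q t) (y t)
      rw [Subtype.dist_eq]
      rw [dist_comm] at h1 h3
      linarith
    obtain ⟨γ, hγ, g0, g1, gε⟩ := hpath _ _ hyst
    refine ⟨fun r => γ ((r - s) / (t - s)), by fun_prop, by simp [g0], ?_, ?_⟩
    · rcases hst.eq_or_lt with rfl | h
      · simp [g0]
      · exact g1 _ (div_self (sub_pos.2 h).ne').ge
    · intro r hrr
      have h1 := hT s hs
      have h2 := hr r hrr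
      have h3 := gε ((r - s) / (t - s))
      rw [dist_comm, Subtype.dist_eq] at h3
      have h4 := dist_triangle4 (q r) (q s) (y s : X) (γ ((r - s) / (t - s)))
      linarith
  have huc := isCompact_Icc.uniformContinuousOn_of_continuous (s := Icc a b) hqc.continuousOn
  obtain ⟨h, hh, hu⟩ := Metric.uniformContinuousOn_iff.1 huc η hη0
  have step : ∀ n : ℕ, ∀ t ∈ Icc a b, t ≤ a + n * (h / 2) → ∃ v : ℝ → L, Continuous v ∧
      v a = y a ∧ v t = y t ∧ ∀ r ∈ Icc a t, dist (q r) (v r) < ε := by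
    intro n
    induction n with
    | zero =>
      intro t ht hta
      refine short a t hTa ht.1 fun r hr => ?_
      have : r = a := le_antisymm (hr.2.trans (by simpa using hta)) hr.1
      rw [this, dist_self]
      exact hη0
    | succ n ih =>
      intro t ht hta
      set s := max a (t - h / 2) with hs
      have has : a ≤ s := le_max_left _ _
      have hts : t - h / 2 ≤ s := le_max_right _ _
      have hst : s ≤ t := max_le ht.1 (by linarith)
      have hsn : s ≤ a + n * (h / 2) := by
        push_cast at hta
        exact max_le (by have : (0 : ℝ) ≤ n * (h / 2) := by positivity
                         linarith) (by linarith)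
      obtain ⟨v, hv, va, vs, vε⟩ := ih s ⟨has, hst.trans ht.2⟩ hsn
      obtain ⟨w, hw, ws, wt, wε⟩ := short s t (hTa.trans has) hst fun r hr => by
        refine hu r ⟨has.trans hr.1, hr.2.trans ht.2⟩ s ⟨has, hst.trans ht.2⟩ ?_
        rw [Real.dist_eq, abs_of_nonneg (by linarith [hr.1])]
        linarith [hr.2]
      refine ⟨fun r => if r ≤ s then v r else w r,
        Continuous.if_le hv hw continuous_id continuous_const (by rintro r rfl; rw [vs, ws]),
        by simp [has, va], ?_, ?_⟩
      · dsimp only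
        split_ifs with hc
        · rw [← le_antisymm hst hc]
          exact vs
        · exact wt
      · intro r hr
        dsimp only
        split_ifs with hc
        · exact vε r ⟨hr.1, hc⟩
        · exact wε r ⟨(not_le.1 hc).le, hr.2⟩
  obtain ⟨n, hn⟩ := exists_nat_ge ((b - a) / (h / 2))
  rw [div_le_iff₀ (by positivity)] at hn
  exact step n b ⟨hab, le_rfl⟩ (by linarith)

/-- A ray converging to a compact locally connected set `L` is asymptotic to a ray in `L`. -/
theorem exists_asymptotic_ray (hLc : IsCompact L) (hne : L.Nonempty) [LocallyConnectedSpace L]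
    (hqc : Continuous q) (hq : ∀ ε > 0, ∃ T, ∀ t ≥ T, Metric.infDist (q t) L < ε) :
    ∃ Γ : ℝ → X, Continuous Γ ∧ (∀ t, Γ t ∈ L) ∧ ∀ ε > 0, ∃ T, ∀ t ≥ T, dist (q t) (Γ t) < ε := by
  have : CompactSpace L := isCompact_iff_compactSpace.1 hLc
  have hyex : ∀ t, ∃ z : L, Metric.infDist (q t) L = dist (q t) z := fun t => by
    obtain ⟨z, hz, h⟩ := hLc.exists_infDist_eq_dist hne (q t)
    exact ⟨⟨z, hz⟩, h⟩
  choose y hy using hyex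
  have hseg := fun k : ℕ => exists_segment_approx (y := y) hqc
    (fun ε hε => by simpa only [hy] using hq ε hε) (show (0 : ℝ) < 1 / (k + 1) by positivity)
  choose S hS using hseg
  set T : ℕ → ℝ := fun k => ∑ j ∈ Finset.range (k + 1), (|S j| + 1) with hT
  have hTsucc : ∀ k, T (k + 1) = T k + (|S (k + 1)| + 1) := fun k => Finset.sum_range_succ _ _
  have hTmono : Monotone T := monotone_nat_of_le_succ fun k => by
    rw [hTsucc]; linarith [abs_nonneg (S (k + 1))]
  have hTk : ∀ k : ℕ, (k : ℝ) ≤ T k := fun k => by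
    induction k with
    | zero => simp [hT]; positivity
    | succ k ih => rw [hTsucc]; push_cast; linarith [abs_nonneg (S (k + 1))]
  have hTS : ∀ k, S k ≤ T k := fun k => by
    have : |S k| + 1 ≤ T k := Finset.single_le_sum (f := fun j => |S j| + 1)
      (fun j _ => by positivity) (Finset.self_mem_range_succ k)
    linarith [le_abs_self (S k)]
  obtain ⟨s, -, hs⟩ := exists_dependent_seq (α := ℝ → L)
    (fun k u => Continuous u ∧ u (T k) = y (T k))
    (fun k u u' => (∀ t ≤ T k, u' t = u t) ∧
      ∀ t ∈ Icc (T k) (T (k + 1)), dist (q t) (u' t) < 1 / (k + 1))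
    (a := fun _ => y (T 0)) ⟨continuous_const, rfl⟩
    (by
      rintro k u ⟨hu, huT⟩
      obtain ⟨v, hv, v1, v2, v3⟩ := hS k (T k) (T (k + 1)) (hTS k) (hTmono k.le_succ)
      refine ⟨fun t => if t ≤ T k then u t else v t,
        ⟨Continuous.if_le hu hv continuous_id continuous_const (by rintro r rfl; rw [huT, v1]), ?_⟩,
        fun t ht => by simp [ht], fun t ht => ?_⟩
      · have : ¬ T (k + 1) ≤ T k := by
          rw [hTsucc]; linarith [abs_nonneg (S (k + 1))]
        simp [this, v2]
      · dsimp only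
        split_ifs with hc
        · have e : t = T k := le_antisymm hc ht.1
          rw [e, huT, ← v1]
          exact v3 _ ⟨le_rfl, hTmono k.le_succ⟩
        · exact v3 t ht)
  have hstab : ∀ k j, k ≤ j → ∀ t ≤ T k, s j t = s k t := by
    intro k j hkj
    induction j, hkj using Nat.le_induction with
    | base => exact fun _ _ => rfl
    | succ j hj ih =>
      intro t ht
      rw [(hs j).2.1 t (ht.trans (hTmono hj)), ih t ht]
  have hceil : ∀ t : ℝ, t ≤ T ⌈t⌉₊ := fun t => (Nat.le_ceil t).trans (hTk _)
  have hΓ : ∀ k t, t ≤ T k → s ⌈t⌉₊ t = s k t := by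
    intro k t ht
    rcases le_total k ⌈t⌉₊ with h | h
    · exact hstab _ _ h t ht
    · exact (hstab _ _ h t (hceil t)).symm
  refine ⟨fun t => s ⌈t⌉₊ t, ?_, fun t => Subtype.coe_prop _, ?_⟩
  · rw [continuous_iff_continuousAt]
    intro t
    have h1 : t < T (⌈t⌉₊ + 1) := (hceil t).trans_lt (by
      rw [hTsucc]; linarith [abs_nonneg (S (⌈t⌉₊ + 1))])
    have h2 : Continuous fun r => (s (⌈t⌉₊ + 1) r : X) :=
      continuous_subtype_val.comp (hs (⌈t⌉₊ + 1)).1.1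
    refine h2.continuousAt.congr ?_
    filter_upwards [Iio_mem_nhds h1] with r hr
    rw [hΓ _ r (le_of_lt hr)]
  · intro ε hε
    obtain ⟨k, hk⟩ := exists_nat_one_div_lt hε
    have close : ∀ j, k + 1 ≤ j → ∀ t ∈ Icc (T k) (T j), dist (q t) (s j t) < 1 / (k + 1) := by
      intro j hj
      induction j, hj using Nat.le_induction with
      | base => exact (hs k).2.2
      | succ j hj ih =>
        intro t ht
        by_cases h : t ≤ T j
        · rw [(hs j).2.1 t h]
          exact ih t ⟨ht.1, h⟩
        · refine ((hs j).2.2 t ⟨(not_le.1 h).le, ht.2⟩).trans_le ?_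
          have : (k : ℝ) ≤ j := by exact_mod_cast (by omega : k ≤ j)
          exact one_div_le_one_div_of_le (by positivity) (by linarith)
    refine ⟨T k, fun t ht => ?_⟩
    have h1 : t ≤ T (max (k + 1) ⌈t⌉₊) := (hceil t).trans (hTmono (le_max_right _ _))
    dsimp only
    rw [hΓ _ t h1]
    exact (close _ (le_max_left _ _) t ⟨ht, h1⟩).trans hk

end Ray

/-! ### Coordinates on the free interval -/

section EndSection

/-- `L` is the limit set of `q t` as `t → ∞`: all terminal parts of the ray `q` compactify
to a set with remainder `L`. -/
def IsEnd {X : Type*} [TopologicalSpace X] (q : ℝ → X) (L : Set X) : Prop :=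
  ∀ c, IsCompact (L ∪ q '' Ici c) ∧ L ⊆ closure (q '' Ici c)

theorem image_Iic_eq {X : Type*} (q : ℝ → X) (b : ℝ) :
    q '' Iic b = (fun t => q (-t)) '' Ici (-b) := by
  rw [← image_image q (fun t => -t), image_neg_eq_neg, Set.neg_Ici, neg_neg]

theorem image_Ici_eq {X : Type*} (q : ℝ → X) (b : ℝ) :
    q '' Ici b = (fun t => q (-t)) '' Iic (-b) := by
  rw [← image_image q (fun t => -t), image_neg_eq_neg, Set.neg_Iic, neg_neg]

/-- It suffices to know the compactification for one terminal part of the ray. -/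
theorem isEnd_of_one {X : Type*} [TopologicalSpace X] [T2Space X] {q : ℝ → X} {L : Set X}
    (hq : IsOpenEmbedding q) (hd : Disjoint L (range q)) {a : ℝ}
    (hc : IsCompact (L ∪ q '' Ici a)) (hcl : L ⊆ closure (q '' Ici a)) : IsEnd q L := by
  intro c
  rcases le_total c a with hca | hac
  · constructor
    · have : L ∪ q '' Ici c = (L ∪ q '' Ici a) ∪ q '' Icc c a := by
        rw [union_assoc, ← image_union, union_comm (Ici a), Icc_union_Ici_eq_Ici hca]
      rw [this]
      exact hc.union (isCompact_Icc.image hq.continuous)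
    · exact hcl.trans (closure_mono (image_mono (Ici_subset_Ici.2 hca)))
  · constructor
    · have : L ∪ q '' Ici c = (L ∪ q '' Ici a) \ q '' Iio c := by
        have h1 : L \ q '' Iio c = L :=
          (hd.mono_right (image_subset_range _ _)).sdiff_eq_left
        rw [union_sdiff_distrib, h1, ← image_sdiff hq.injective]
        congr 2
        ext t
        simp only [mem_Ici, Set.mem_sdiff, mem_Iio, not_lt]
        exact ⟨fun h => ⟨hac.trans h, h⟩, fun h => h.2⟩
      rw [this]
      exact hc.diff (hq.isOpenMap _ isOpen_Iio)
    · intro x hx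
      have h1 := hcl hx
      rw [← Icc_union_Ici_eq_Ici hac, image_union, closure_union,
        (isCompact_Icc.image hq.continuous).isClosed.closure_eq] at h1
      exact h1.resolve_left fun h => (disjoint_left.1 hd) hx (image_subset_range _ _ h)

theorem IsEnd.infDist_lt {X : Type*} [MetricSpace X] {q : ℝ → X} {L : Set X}
    (h : IsEnd q L) (hq : IsOpenEmbedding q) {ε : ℝ} (hε : 0 < ε) :
    ∃ T, ∀ t ≥ T, Metric.infDist (q t) L < ε := by
  have hU : IsOpen {x | Metric.infDist x L < ε} :=
    isOpen_lt (Metric.continuous_infDist_pt L) continuous_const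
  have hK := (h 0).1.diff hU
  have hsub : (L ∪ q '' Ici 0) \ {x | Metric.infDist x L < ε} ⊆ range q := by
    rintro x ⟨hx | hx, hx'⟩
    · exact absurd (show Metric.infDist x L < ε by rwa [Metric.infDist_zero_of_mem hx]) hx'
    · exact image_subset_range _ _ hx
  obtain ⟨T, hT⟩ := (hq.isInducing.isCompact_preimage' hK hsub).bddAbove
  refine ⟨max 0 (T + 1), fun t ht => ?_⟩
  by_contra hcon
  have := hT (show t ∈ q ⁻¹' _ from ⟨Or.inr ⟨t, (le_max_left _ _).trans ht, rfl⟩, hcon⟩)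
  linarith [(le_max_right 0 (T + 1)).trans ht]

/-- A closed strictly increasing image of the ray `[0, ∞)` in the line is a closed half-line. -/
theorem range_eq_Ici_of_strictMono {p : NNReal → ℝ} (hp : Continuous p) (hm : StrictMono p)
    (hcl : IsClosed (range p)) : range p = Ici (p 0) := by
  apply Subset.antisymm
  · rintro _ ⟨s, rfl⟩
    exact hm.monotone zero_le
  · intro x hx
    have hub : ¬ BddAbove (range p) := fun hb => by
      obtain ⟨s, hs⟩ := hcl.csSup_mem (range_nonempty p) hb
      have h1 := le_csSup hb (mem_range_self (s + 1))
      have h2 : p s < p (s + 1) := hm (by simp)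
      linarith
    rw [not_bddAbove_iff] at hub
    obtain ⟨y, hy, hxy⟩ := hub x
    exact (isPreconnected_range hp).ordConnected.out (mem_range_self 0) hy ⟨hx, hxy.le⟩

theorem ray_in_line {p : NNReal → ℝ} (hp : Continuous p) (hi : Function.Injective p)
    (hcl : IsClosed (range p)) : ∃ a, range p = Ici a ∨ range p = Iic a := by
  rcases hp.strictMono_of_inj hi with h | h
  · exact ⟨_, Or.inl (range_eq_Ici_of_strictMono hp h hcl)⟩
  · have h1 : range (fun s => - p s) = Neg.neg ⁻¹' range p := by
      ext x
      simp only [mem_range, mem_preimage]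
      exact exists_congr fun s => by rw [neg_eq_iff_eq_neg]
    have h2 := range_eq_Ici_of_strictMono hp.neg h.neg (by
      change IsClosed (range fun s => - p s)
      rw [h1]; exact hcl.preimage continuous_neg)
    refine ⟨p 0, Or.inr ?_⟩
    ext x
    have h3 : -x ∈ range (fun s => - p s) ↔ -x ∈ Ici (- p 0) := by
      change -x ∈ range (-p) ↔ _
      rw [h2]; simp
    rw [h1] at h3
    simpa using h3

/-- A ray in the free interval whose union with `L` is compact is closed in the interval, hence a
half-line in the coordinate `q`. -/
theorem ray_preimage {X : Type*} [TopologicalSpace X] [T2Space X] {q : ℝ → X} {L A : Set X}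
    (hq : IsOpenEmbedding q) (hd : Disjoint L (range q)) (hA : A ⊆ range q) (hray : IsRaySet A)
    (hc : IsCompact (L ∪ A)) : ∃ a, A = q '' Ici a ∨ A = q '' Iic a := by
  obtain ⟨φ⟩ := hray
  let e := hq.isEmbedding.toHomeomorph
  let p : NNReal → ℝ := fun s => e.symm ⟨φ.symm s, hA (φ.symm s).2⟩
  have hqp : ∀ s, q (p s) = φ.symm s := fun s => by
    have := e.apply_symm_apply ⟨φ.symm s, hA (φ.symm s).2⟩
    exact congrArg Subtype.val this
  have hpc : Continuous p := by
    refine e.symm.continuous.comp (Continuous.subtype_mk ?_ _)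
    exact continuous_subtype_val.comp φ.symm.continuous
  have hpi : Function.Injective p := fun s t hst => by
    have : (φ.symm s : X) = φ.symm t := by rw [← hqp, ← hqp, hst]
    exact φ.symm.injective (Subtype.ext this)
  have hA' : A = q '' range p := by
    ext x
    constructor
    · intro hx
      refine ⟨p (φ ⟨x, hx⟩), mem_range_self _, ?_⟩
      exact (hqp (φ ⟨x, hx⟩)).trans (congrArg Subtype.val (φ.symm_apply_apply ⟨x, hx⟩))
    · rintro ⟨_, ⟨s, rfl⟩, rfl⟩
      rw [hqp]
      exact (φ.symm s).2
  have hcl : IsClosed (range p) := by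
    have : range p = q ⁻¹' (L ∪ A) := by
      rw [hA', preimage_union, preimage_image_eq _ hq.injective]
      have : q ⁻¹' L = ∅ := by
        ext t
        simp only [mem_preimage, mem_empty_iff_false, iff_false]
        exact fun h => disjoint_left.1 hd h (mem_range_self t)
      rw [this, empty_union]
    rw [this]
    exact hc.isClosed.preimage hq.continuous
  obtain ⟨a, h | h⟩ := ray_in_line hpc hpi hcl
  · exact ⟨a, Or.inl (by rw [hA', h])⟩
  · exact ⟨a, Or.inr (by rw [hA', h])⟩

/-- The sigmoid function as a homeomorphism of the line onto the open unit interval. -/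
noncomputable def realHomeoIoo : ℝ ≃ₜ Ioo (0 : ℝ) 1 :=
  ((Real.sigmoid_strictMono.orderIso _).trans (OrderIso.setCongr _ _ Real.range_sigmoid)).toHomeomorph

/-- Coordinates on the free interval: `J` is parametrized by the real line in such a way that `L`
is its limit set at `+∞` and `R` its limit set at `-∞`. -/
theorem ClassC.exists_coordinates {X : Type*} [TopologicalSpace X] [T2Space X] {L J R : Set X}
    (hC : ClassC L J R) : ∃ q : ℝ → X, IsOpenEmbedding q ∧ range q = J ∧ IsEnd q L ∧
      IsEnd (fun t => q (-t)) R := by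
  obtain ⟨h⟩ := hC.freeJ
  obtain ⟨JL, JR, hU, rL, rR, cL, dL, cR, dR⟩ := hC.rays
  let e : ℝ ≃ₜ J := realHomeoIoo.trans h.symm
  have main : ∀ q : ℝ → X, IsOpenEmbedding q → range q = J → ∀ a b, JL = q '' Ici a →
      JR = q '' Iic b → IsEnd q L ∧ IsEnd (fun t => q (-t)) R := by
    intro q hq hr a b ha hb
    have hdL : Disjoint L (range q) := hr ▸ hC.disjLJ
    have hq' : IsOpenEmbedding (fun t => q (-t)) :=
      hq.comp (Homeomorph.neg ℝ).isOpenEmbedding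
    have hr' : range (fun t => q (-t)) = J := by
      rw [← hr]; exact (Homeomorph.neg ℝ).surjective.range_comp q
    have hdR : Disjoint R (range fun t => q (-t)) := hr' ▸ hC.disjRJ
    have hb' : JR = (fun t => q (-t)) '' Ici (-b) := by
      rw [hb, image_Iic_eq]
    subst ha
    rw [hb'] at cR dR
    exact ⟨isEnd_of_one hq hdL cL (subset_union_left.trans dL),
      isEnd_of_one hq' hdR cR (subset_union_left.trans dR)⟩
  let q : ℝ → X := fun t => e t
  have hq : IsOpenEmbedding q := hC.openJ.isOpenEmbedding_subtypeVal.comp e.isOpenEmbedding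
  have hr : range q = J := by
    have : range q = Subtype.val '' range e := by rw [← range_comp]; rfl
    rw [this, e.surjective.range_eq, image_univ, Subtype.range_coe]
  have hJL : JL ⊆ range q := by rw [hr, ← hU]; exact subset_union_left
  have hJR : JR ⊆ range q := by rw [hr, ← hU]; exact subset_union_right
  have nocover : ∀ s : Set ℝ, JL ∪ JR = q '' s → s = univ := fun s hs => by
    rw [hU, ← hr, ← image_univ] at hs
    exact (hq.injective.image_injective hs).symm
  obtain ⟨a, ha⟩ := ray_preimage hq (hr ▸ hC.disjLJ) hJL rL cL
  obtain ⟨b, hb⟩ := ray_preimage hq (hr ▸ hC.disjRJ) hJR rR cR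
  -- Two half-lines pointing in the same direction do not cover the line.
  rcases ha with ha | ha <;> rcases hb with hb | hb
  · have := nocover (Ici a ∪ Ici b) (by rw [ha, hb, image_union])
    have h' : min a b - 1 ∈ Ici a ∪ Ici b := this ▸ mem_univ _
    rcases h' with h' | h' <;> rw [mem_Ici] at h'
    · linarith [min_le_left a b]
    · linarith [min_le_right a b]
  · exact ⟨q, hq, hr, main q hq hr a b ha hb⟩
  · have hq' : IsOpenEmbedding (fun t => q (-t)) :=
      hq.comp (Homeomorph.neg ℝ).isOpenEmbedding
    have hr' : range (fun t => q (-t)) = J := by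
      rw [← hr]; exact (Homeomorph.neg ℝ).surjective.range_comp q
    refine ⟨_, hq', hr', main _ hq' hr' (-a) (-b) ?_ ?_⟩
    · rw [ha, image_Iic_eq]
    · rw [hb, image_Ici_eq]
  · have := nocover (Iic a ∪ Iic b) (by rw [ha, hb, image_union])
    have h' : max a b + 1 ∈ Iic a ∪ Iic b := this ▸ mem_univ _
    rcases h' with h' | h' <;> rw [mem_Iic] at h'
    · linarith [le_max_left a b]
    · linarith [le_max_right a b]

end EndSection

/-! ### Images of connected, locally connected spaces -/

section NoCrossing

/-- No terminal part of the ray stays in a set `W` missing a neighbourhood of a point of `L`. -/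
theorem IsEnd.not_subset {X : Type*} [TopologicalSpace X] {q : ℝ → X} {L W U : Set X}
    (h : IsEnd q L) {l : X} (hl : l ∈ L) (hU : IsOpen U) (hlU : l ∈ U) (hd : Disjoint W U)
    {b : ℝ} (hW : q '' Ici b ⊆ W) : False := by
  obtain ⟨x, hxU, hx⟩ := mem_closure_iff.1 ((h b).2 hl) U hU hlU
  exact disjoint_left.1 hd (hW hx) hxU

theorem ordConnected_unbounded {B : Set ℝ} (hB : B.OrdConnected) (hne : B.Nonempty)
    (hub : ∀ T, ¬ B ⊆ Icc (-T) T) : ∃ b, Ici b ⊆ B ∨ Iic b ⊆ B := by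
  obtain ⟨b, hb⟩ := hne
  refine ⟨b, ?_⟩
  by_contra hcon
  rw [not_or, not_subset, not_subset] at hcon
  obtain ⟨⟨u, hu, huB⟩, ⟨v, hv, hvB⟩⟩ := hcon
  apply hub (max (|u|) (|v|))
  intro t ht
  have h1 : t ≤ u := by
    by_contra hlt
    exact huB (hB.out hb ht ⟨hu, (not_le.1 hlt).le⟩)
  have h2 : v ≤ t := by
    by_contra hlt
    exact hvB (hB.out ht hb ⟨(not_le.1 hlt).le, hv⟩)
  constructor
  · have := neg_abs_le v
    linarith [le_max_right (|u|) (|v|)]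
  · have := le_abs_self u
    linarith [le_max_left (|u|) (|v|)]

/-- A continuous image of a connected, locally connected space lies in the free interval or misses
it. Otherwise some point `y` is sent to `L ∪ R` but is a limit of points sent into the interval. A
small connected neighbourhood of `y` then has an image containing a whole end of the interval, and
this end accumulates at points of `L` or `R` far from `f y`. -/
theorem no_crossing {X Y : Type*} [TopologicalSpace X] [T2Space X] [TopologicalSpace Y]
    [PreconnectedSpace Y] [LocallyConnectedSpace Y] {q : ℝ → X} {L R : Set X}
    (hq : IsOpenEmbedding q) (hqL : IsEnd q L) (hqR : IsEnd (fun t => q (-t)) R)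
    (hL : L.Nontrivial) (hR : R.Nontrivial) {f : Y → X} (hf : Continuous f) :
    (∀ y, f y ∈ range q) ∨ ∀ y, f y ∉ range q := by
  have hO : IsOpen (f ⁻¹' range q) := hq.isOpen_range.preimage hf
  by_cases hcl : IsClosed (f ⁻¹' range q)
  · rcases isClopen_iff.1 ⟨hcl, hO⟩ with h | h
    · right
      intro y hy
      exact (Set.ext_iff.1 h y).1 hy
    · left
      intro y
      exact (Set.ext_iff.1 h y).2 (mem_univ y)
  exfalso
  obtain ⟨y, hyc, hy⟩ : ∃ y ∈ closure (f ⁻¹' range q), y ∉ f ⁻¹' range q := by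
    rw [← not_subset]
    exact fun h => hcl (closure_eq_iff_isClosed.1 (h.antisymm subset_closure))
  obtain ⟨l, hl, hly⟩ := hL.exists_ne (f y)
  obtain ⟨r, hr, hry⟩ := hR.exists_ne (f y)
  obtain ⟨U, W1, hU, hW1, hlU, hyW1, hd1⟩ := t2_separation hly
  obtain ⟨V, W2, hV, hW2, hrV, hyW2, hd2⟩ := t2_separation hry
  have hWo : IsOpen (f ⁻¹' (W1 ∩ W2)) := (hW1.inter hW2).preimage hf
  set W := connectedComponentIn (f ⁻¹' (W1 ∩ W2)) y with hWdef
  have hyW : y ∈ W := mem_connectedComponentIn (show y ∈ f ⁻¹' (W1 ∩ W2) from ⟨hyW1, hyW2⟩)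
  have hWop : IsOpen W := hWo.connectedComponentIn
  have hWsub : W ⊆ f ⁻¹' (W1 ∩ W2) := connectedComponentIn_subset _ _
  have hWc : IsPreconnected W := isPreconnected_connectedComponentIn
  obtain ⟨z, hzW, hzO⟩ := mem_closure_iff.1 hyc W hWop hyW
  set C := connectedComponentIn (W ∩ f ⁻¹' range q) z with hCdef
  have hzC : z ∈ C := mem_connectedComponentIn ⟨hzW, hzO⟩
  have hCop : IsOpen C := (hWop.inter hO).connectedComponentIn
  have hCsub : C ⊆ W ∩ f ⁻¹' range q := connectedComponentIn_subset _ _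
  have hCc : IsPreconnected C := isPreconnected_connectedComponentIn
  -- A boundary point `w` of `C` in `W` must be sent outside of the free interval.
  obtain ⟨w, hwW, hwc, hwC⟩ : ∃ w ∈ W, w ∈ closure C ∧ w ∉ C := by
    by_contra! hcon
    have := hWc.subset_of_closure_inter_subset hCop ⟨z, hzW, hzC⟩
      (fun w hw => hcon w hw.2 hw.1)
    exact hy (hCsub (this hyW)).2
  have hwO : w ∉ f ⁻¹' range q := by
    intro hwO
    have h1 : IsPreconnected (insert w C) :=
      hCc.subset_closure (subset_insert _ _) (insert_subset hwc subset_closure)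
    have h2 := h1.subset_connectedComponentIn (mem_insert_of_mem w hzC)
      (insert_subset (show w ∈ W ∩ f ⁻¹' range q from ⟨hwW, hwO⟩) hCsub)
    exact hwC (h2 (mem_insert w C))
  have hfC : f '' C ⊆ range q := by
    rintro _ ⟨c, hc, rfl⟩
    exact (hCsub hc).2
  have hB : IsPreconnected (q ⁻¹' (f '' C)) :=
    (hCc.image f hf.continuousOn).preimage_of_isOpenMap hq.injective hq.isOpenMap hfC
  have hBne : (q ⁻¹' (f '' C)).Nonempty := by
    obtain ⟨t, ht⟩ := hzO
    exact ⟨t, z, hzC, ht.symm⟩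
  -- If the part of the interval covered by `C` were bounded, `f w` would be in the interval.
  have hunb : ∀ T, ¬ q ⁻¹' (f '' C) ⊆ Icc (-T) T := by
    intro T hT
    have h1 : f '' C ⊆ q '' Icc (-T) T := by
      intro x hx
      obtain ⟨t, rfl⟩ := hfC hx
      exact ⟨t, hT hx, rfl⟩
    have h2 : f w ∈ closure (q '' Icc (-T) T) :=
      closure_mono h1 (image_closure_subset_closure_image hf (mem_image_of_mem f hwc))
    rw [(isCompact_Icc.image hq.continuous).isClosed.closure_eq] at h2
    exact hwO (image_subset_range _ _ h2)
  have hBW : ∀ t ∈ q ⁻¹' (f '' C), q t ∈ W1 ∩ W2 := by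
    rintro t ⟨c, hc, hct⟩
    rw [← hct]
    exact hWsub (hCsub hc).1
  obtain ⟨b, hb | hb⟩ := ordConnected_unbounded hB.ordConnected hBne hunb
  · refine hqL.not_subset hl hU hlU hd1.symm (b := b) ?_
    rintro _ ⟨t, ht, rfl⟩
    exact (hBW t (hb ht)).1
  · refine hqR.not_subset hr hV hrV hd2.symm (b := -b) ?_
    rintro _ ⟨t, ht, rfl⟩
    exact (hBW (-t) (hb (neg_le.1 (mem_Ici.1 ht)))).2

end NoCrossing

/-! ### The retraction onto the union of the two ends -/

section Retraction

/-- A Peano continuum is path connected. -/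
theorem isPathConnected_of_locallyConnected {X : Type*} [MetricSpace X] {L : Set X}
    (hLc : IsCompact L) (hL : IsConnected L) [LocallyConnectedSpace L] : IsPathConnected L := by
  have : CompactSpace L := isCompact_iff_compactSpace.1 hLc
  have : ConnectedSpace L := isConnected_iff_connectedSpace.1 hL
  rw [isPathConnected_iff_pathConnectedSpace]
  obtain ⟨δ, hδ, hp⟩ := exists_small_path (A := L) one_pos
  have hjoin : ∀ x y : L, Joined x y := by
    have : Std.Symm (Joined (X := L)) := ⟨fun _ _ h => h.symm⟩
    refine PreconnectedSpace.induction₂ Joined (fun x => ?_) ⟨fun _ _ _ h h' => h.trans h'⟩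
    filter_upwards [Metric.ball_mem_nhds x hδ] with y hy
    obtain ⟨γ, hγ, h0, h1, -⟩ := hp x y (by rwa [dist_comm])
    exact ⟨⟨⟨fun t => γ t, by fun_prop⟩, h0 _ (by simp), h1 _ (by simp)⟩⟩
  exact ⟨inferInstance, hjoin⟩

/-- `L ∪ R` is a retract of the whole space: the two ends of the free interval follow
asymptotic rays in `L` and in `R`, and these rays can be joined inside of `L ∪ R`. -/
theorem exists_retraction {X : Type*} [TopologicalSpace X] [CompactSpace X]
    [TopologicalSpace.MetrizableSpace X] {q : ℝ → X} {L R : Set X}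
    (hq : IsOpenEmbedding q) (hqL : IsEnd q L) (hqR : IsEnd (fun t => q (-t)) R)
    (hLc : IsCompact L) (hL : IsConnected L) [LocallyConnectedSpace L]
    (hRc : IsCompact R) (hR : IsConnected R) [LocallyConnectedSpace R]
    (hcov : ∀ x, x ∈ range q ∨ x ∈ L ∪ R) (hdis : Disjoint (L ∪ R) (range q))
    (hLR : (L ∩ R).Nonempty) :
    ∃ r : X → X, Continuous r ∧ (∀ x, r x ∈ L ∪ R) ∧ ∀ x ∈ L ∪ R, r x = x := by
  classical
  let _ := TopologicalSpace.metrizableSpaceMetric X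
  have hq' : IsOpenEmbedding (fun t => q (-t)) := hq.comp (Homeomorph.neg ℝ).isOpenEmbedding
  obtain ⟨ΓL, hΓLc, hΓL, haL⟩ := exists_asymptotic_ray hLc hL.nonempty hq.continuous
    fun ε hε => hqL.infDist_lt hq hε
  obtain ⟨ΓR, hΓRc, hΓR, haR⟩ := exists_asymptotic_ray hRc hR.nonempty hq'.continuous
    fun ε hε => hqR.infDist_lt hq' hε
  have hK : IsPathConnected (L ∪ R) :=
    (isPathConnected_of_locallyConnected hLc hL).union
      (isPathConnected_of_locallyConnected hRc hR) hLR
  have hj := hK.joinedIn (ΓR 0) (Or.inr (hΓR 0)) (ΓL 1) (Or.inl (hΓL 1))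
  set p := hj.somePath
  let Γ : ℝ → X := fun t => if t ≤ 0 then ΓR (-t) else if t ≤ 1 then p.extend t else ΓL t
  have hΓc : Continuous Γ := by
    refine Continuous.if_le (by fun_prop) (Continuous.if_le p.continuous_extend hΓLc
      continuous_id continuous_const ?_) continuous_id continuous_const ?_
    · rintro t rfl
      simp
    · rintro t rfl
      simp
  have hΓK : ∀ t, Γ t ∈ L ∪ R := fun t => by
    simp only [Γ]
    split_ifs
    · exact Or.inr (hΓR _)
    · exact hj.somePath_mem _
    · exact Or.inl (hΓL _)
  have hΓa : ∀ ε > 0, ∃ T, ∀ t, t ∉ Icc (-T) T → dist (q t) (Γ t) < ε := by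
    intro ε hε
    obtain ⟨T1, h1⟩ := haL ε hε
    obtain ⟨T2, h2⟩ := haR ε hε
    refine ⟨max 1 (max T1 T2), fun t ht => ?_⟩
    have e1 := le_max_left 1 (max T1 T2)
    have e2 := (le_max_left T1 T2).trans (le_max_right 1 _)
    have e3 := (le_max_right T1 T2).trans (le_max_right 1 _)
    rw [mem_Icc, not_and_or, not_le, not_le] at ht
    rcases ht with ht | ht
    · have h := h2 (-t) (by linarith)
      simp only [neg_neg] at h
      simpa only [Γ, if_pos (show t ≤ 0 by linarith)] using h
    · have h := h1 t (by linarith)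
      simpa only [Γ, if_neg (show ¬ t ≤ 0 by linarith), if_neg (show ¬ t ≤ 1 by linarith)] using h
  let r : X → X := fun x => if h : x ∈ range q then Γ h.choose else x
  have hrq : ∀ t, r (q t) = Γ t := fun t => by
    have h : q t ∈ range q := mem_range_self t
    simp only [r, dif_pos h]
    rw [hq.injective h.choose_spec]
  have hrK : ∀ x ∈ L ∪ R, r x = x := fun x hx => by
    simp only [r, dif_neg (disjoint_left.1 hdis hx)]
  refine ⟨r, continuous_iff_continuousAt.2 fun x => ?_, fun x => ?_, hrK⟩
  · rcases hcov x with ⟨t, rfl⟩ | hx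
    · rw [← hq.continuousAt_iff]
      have : r ∘ q = Γ := funext hrq
      rw [this]
      exact hΓc.continuousAt
    · rw [Metric.continuousAt_iff']
      intro ε hε
      obtain ⟨T, hT⟩ := hΓa (ε / 2) (half_pos hε)
      have hop : IsOpen (q '' Icc (-T) T)ᶜ :=
        (isCompact_Icc.image hq.continuous).isClosed.isOpen_compl
      have hxm : x ∈ (q '' Icc (-T) T)ᶜ := fun h =>
        disjoint_left.1 hdis hx (image_subset_range _ _ h)
      filter_upwards [hop.mem_nhds hxm, Metric.ball_mem_nhds x (half_pos hε)] with z hz hzx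
      rw [hrK x hx]
      rw [Metric.mem_ball] at hzx
      rcases hcov z with ⟨t, rfl⟩ | hzK
      · rw [hrq]
        have := hT t fun h => hz ⟨t, h, rfl⟩
        rw [dist_comm] at this
        linarith [dist_triangle (Γ t) (q t) x]
      · rw [hrK z hzK]
        linarith
  · rcases hcov x with ⟨t, rfl⟩ | hx
    · rw [hrq]
      exact hΓK t
    · rw [hrK x hx]
      exact hx

end Retraction

/-! ### Subspaces and extensions -/

section Reformulation

theorem MinimalSystemOn.congr {Y : Type*} [TopologicalSpace Y] {f g : Y → Y} {M : Set Y}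
    (hf : MinimalSystemOn f M) (h : EqOn f g M) : MinimalSystemOn g M := by
  refine ⟨hf.1, by rw [← image_congr h, hf.2.1], fun N hN hne hcl hinv => ?_⟩
  exact hf.2.2 N hN hne hcl (by rwa [image_congr fun x hx => h (hN hx)])

/-- The condition that `M` belongs to `𝓜(Z)` expressed through self-maps of the ambient space. -/
theorem mem_MSetIn_iff {X : Type*} [TopologicalSpace X] [T2Space X] {Z M : Set X} :
    M ∈ MSetIn Z ↔ M ⊆ Z ∧ IsCompact M ∧ ∃ F : X → X, ContinuousOn F Z ∧ MapsTo F Z Z ∧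
      MinimalSystemOn F M := by
  classical
  constructor
  · rintro ⟨M', ⟨hM', f, hf, hne, him, hmin⟩, rfl⟩
    let F : X → X := fun x => if h : x ∈ Z then f ⟨x, h⟩ else x
    have hF : ∀ z : Z, F z = f z := fun z => by simp [F]
    have himF : ∀ A : Set Z, F '' (Subtype.val '' A) = Subtype.val '' (f '' A) := fun A => by
      rw [image_image, image_image]
      exact image_congr fun z _ => hF z
    refine ⟨Subtype.coe_image_subset Z M', hM'.image continuous_subtype_val, F, ?_, ?_, ?_⟩
    · rw [continuousOn_iff_continuous_domRestrict]
      have : Z.domRestrict F = fun z => (f z : X) := funext hF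
      rw [this]
      fun_prop
    · intro x hx
      rw [hF ⟨x, hx⟩]
      exact (f _).2
    · refine ⟨hne.image _, by rw [himF, him], fun N hN hNne hNcl hinv => ?_⟩
      have hNe : N = Subtype.val '' (Subtype.val ⁻¹' N : Set Z) := by
        rw [Subtype.image_preimage_coe, inter_eq_right.2]
        exact hN.trans (Subtype.coe_image_subset Z M')
      have h1 : (Subtype.val ⁻¹' N : Set Z) = M' := by
        refine hmin _ ?_ ?_ (hNcl.preimage continuous_subtype_val) ?_
        · intro z hz
          obtain ⟨w, hw, hwz⟩ := hN hz
          rwa [← Subtype.ext hwz]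
        · rw [hNe] at hNne
          exact hNne.of_image
        · rintro _ ⟨z, hz, rfl⟩
          rw [mem_preimage, ← hF]
          exact hinv ⟨z, hz, rfl⟩
      rw [hNe, h1]
  · rintro ⟨hMZ, hMc, F, hFc, hFZ, hne, him, hmin⟩
    have hMe : Subtype.val '' (Subtype.val ⁻¹' M : Set Z) = M := by
      rw [Subtype.image_preimage_coe, inter_eq_right.2 hMZ]
    have hM'c : IsCompact (Subtype.val ⁻¹' M : Set Z) := by
      rw [Subtype.isCompact_iff, hMe]
      exact hMc
    let f : Z → Z := hFZ.restrict F Z Z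
    have himf : ∀ A : Set Z, Subtype.val '' (f '' A) = F '' (Subtype.val '' A) := fun A => by
      rw [image_image, image_image]
      rfl
    refine ⟨Subtype.val ⁻¹' M, ⟨hM'c, f, hFc.mapsToRestrict hFZ, ?_, ?_, ?_⟩, hMe.symm⟩
    · rw [← hMe] at hne
      exact hne.of_image
    · apply Subtype.val_injective.image_injective
      rw [himf, hMe, him]
    · intro N hN hNne hNcl hinv
      apply Subtype.val_injective.image_injective
      rw [hMe]
      refine hmin _ ?_ (hNne.image _) ?_ ?_
      · rw [← hMe]
        exact image_mono hN
      · exact ((hM'c.of_isClosed_subset hNcl hN).image continuous_subtype_val).isClosed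
      · rw [← himf]
        exact image_mono hinv

/-- The free interval is an absolute extensor, so dynamics on a compact subset of it extend. -/
theorem exists_extension {X : Type*} [TopologicalSpace X] [CompactSpace X] [T2Space X]
    {q : ℝ → X} (hq : IsOpenEmbedding q) {M : Set X} (hM : IsCompact M) {g : X → X}
    (hg : ContinuousOn g M) (hgM : MapsTo g M (range q)) :
    ∃ G : X → X, Continuous G ∧ (∀ x, G x ∈ range q) ∧ EqOn G g M := by
  let e := hq.isEmbedding.toHomeomorph
  let g0 : C(M, ℝ) := ⟨fun x => e.symm ⟨g x, hgM x.2⟩,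
    e.symm.continuous.comp (Continuous.subtype_mk (continuousOn_iff_continuous_domRestrict.1 hg) _)⟩
  obtain ⟨G0, hG0⟩ := ContinuousMap.exists_restrict_eq hM.isClosed g0
  refine ⟨fun x => q (G0 x), hq.continuous.comp G0.continuous, fun x => mem_range_self _, ?_⟩
  intro x hx
  have h1 : G0 x = g0 ⟨x, hx⟩ := by rw [← hG0]; rfl
  change q (G0 x) = g x
  rw [h1]
  exact congrArg Subtype.val (e.apply_symm_apply ⟨g x, hgM hx⟩)

end Reformulation

/-! ### Minimal sets lie on one side -/

section Dichotomy

/-- A minimal set meeting both the free interval and its complement `K = L ∪ R` is impossible: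
`K` is mapped into `K` or into the free interval, and either alternative is incompatible with
minimality. -/
theorem minimal_dichotomy {X : Type*} [TopologicalSpace X] [T2Space X]
    {q : ℝ → X} {L R : Set X} (hq : IsOpenEmbedding q) (hqL : IsEnd q L)
    (hqR : IsEnd (fun t => q (-t)) R) (hL : L.Nontrivial) (hR : R.Nontrivial)
    (hLc : IsConnected L) [LocallyConnectedSpace L] (hRc : IsConnected R)
    [LocallyConnectedSpace R] (hcov : ∀ x, x ∈ range q ∨ x ∈ L ∪ R)
    (hdis : Disjoint (L ∪ R) (range q)) (hLR : (L ∩ R).Nonempty) (hden : Dense (range q))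
    {f : X → X} (hf : Continuous f) {M : Set X} (hM : IsCompact M) (hmin : MinimalSystemOn f M) :
    M ⊆ range q ∨ M ⊆ L ∪ R := by
  have : ConnectedSpace L := isConnected_iff_connectedSpace.1 hLc
  have : ConnectedSpace R := isConnected_iff_connectedSpace.1 hRc
  have hK : ∀ x, x ∈ L ∪ R ↔ x ∉ range q := fun x =>
    ⟨fun h => disjoint_left.1 hdis h, fun h => (hcov x).resolve_left h⟩
  have hKcl : IsClosed (L ∪ R) := by
    have : L ∪ R = (range q)ᶜ := Set.ext hK
    rw [this]
    exact hq.isOpen_range.isClosed_compl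
  have hfL := no_crossing hq hqL hqR hL hR (hf.comp (continuous_subtype_val (p := (· ∈ L))))
  have hfR := no_crossing hq hqL hqR hL hR (hf.comp (continuous_subtype_val (p := (· ∈ R))))
  have hfJ := no_crossing hq hqL hqR hL hR (hf.comp hq.continuous)
  have hfK : (∀ x ∈ L ∪ R, f x ∈ range q) ∨ ∀ x ∈ L ∪ R, f x ∉ range q := by
    obtain ⟨z, hzL, hzR⟩ := hLR
    rcases hfL with hl | hl <;> rcases hfR with hr | hr
    · exact Or.inl fun x hx => hx.elim (fun h => hl ⟨x, h⟩) fun h => hr ⟨x, h⟩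
    · exact absurd (hl ⟨z, hzL⟩) (hr ⟨z, hzR⟩)
    · exact absurd (hr ⟨z, hzR⟩) (hl ⟨z, hzL⟩)
    · exact Or.inr fun x hx => hx.elim (fun h => hl ⟨x, h⟩) fun h => hr ⟨x, h⟩
  rcases hfK with hfK | hfK
  · left
    -- By density, `f` cannot send the interval to `K` and at the same time `K` to the interval.
    have hfX : ∀ x, f x ∈ range q := by
      rcases hfJ with hfJ | hfJ
      · intro x
        rcases hcov x with ⟨t, rfl⟩ | hx
        · exact hfJ t
        · exact hfK x hx
      · exfalso
        obtain ⟨z, hzL, hzR⟩ := hLR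
        have h1 : closure (range q) ⊆ f ⁻¹' (L ∪ R) := by
          refine closure_minimal ?_ (hKcl.preimage hf)
          rintro _ ⟨t, rfl⟩
          exact (hK _).2 (hfJ t)
        exact (hK _).1 (h1 (hden z)) (hfK z (Or.inl hzL))
    rw [← hmin.2.1]
    rintro _ ⟨x, -, rfl⟩
    exact hfX x
  · by_cases hne : (M ∩ (L ∪ R)).Nonempty
    · right
      rw [← hmin.2.2 _ inter_subset_left hne (hM.isClosed.inter hKcl) ?_]
      · exact inter_subset_right
      · rintro _ ⟨x, ⟨hxM, hxK⟩, rfl⟩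
        exact ⟨hmin.2.1 ▸ mem_image_of_mem f hxM, (hK _).2 (hfK x hxK)⟩
    · left
      intro x hx
      by_contra h
      exact hne ⟨x, hx, (hK x).2 h⟩

end Dichotomy

/-! ### Minimal maps of linear compacta -/

section MinimalMaps

/-- A self-map `T` of a whole space is minimal if it has no proper nonempty closed invariant
set. -/
def IsMinimalMap {Y : Type*} [TopologicalSpace Y] (T : Y → Y) : Prop :=
  ∀ N : Set Y, N.Nonempty → IsClosed N → MapsTo T N N → N = univ

/-- Every forward orbit, starting from its second point, visits every nonempty open set. -/
theorem IsMinimalMap.exists_iterate_mem {Y : Type*} [TopologicalSpace Y] {T : Y → Y}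
    (hT : IsMinimalMap T) (hc : Continuous T) {U : Set Y} (hU : IsOpen U) (hne : U.Nonempty)
    (y : Y) : ∃ n > 0, T^[n] y ∈ U := by
  have h := hT (closure (range fun n => T^[n] (T y))) ((range_nonempty _).closure) isClosed_closure
    (by
      refine MapsTo.closure ?_ hc
      rintro _ ⟨n, rfl⟩
      exact ⟨n + 1, Function.iterate_succ_apply' T n (T y)⟩)
  obtain ⟨u, hu⟩ := hne
  obtain ⟨_, hz, ⟨n, rfl⟩⟩ := mem_closure_iff.1 (h ▸ mem_univ u) U hU hu
  exact ⟨n + 1, n.succ_pos, hz⟩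

theorem IsMinimalMap.finite_of_periodic {Y : Type*} [TopologicalSpace Y] [T1Space Y] {T : Y → Y}
    (hT : IsMinimalMap T) {n : ℕ} (hn : 0 < n) {y : Y} (hy : T^[n] y = y) : Finite Y := by
  have hfin : ((fun k => T^[k] y) '' Iio n).Finite := (finite_Iio n).image _
  have h := hT _ (Nonempty.image _ ⟨0, hn⟩) hfin.isClosed (by
    rintro _ ⟨k, -, rfl⟩
    refine ⟨(k + 1) % n, Nat.mod_lt _ hn, ?_⟩
    have hp : Function.IsPeriodicPt T n y := hy
    simp only
    rw [hp.iterate_mod_apply, Function.iterate_succ_apply'])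
  rw [← finite_univ_iff, ← h]
  exact hfin

/-- Minimal maps on compact spaces that embed in the line live on finite sets or on Cantor sets:
an interval component would return to itself, producing a periodic point. -/
theorem IsMinimalMap.finite_or_cantor {Y : Type*} [TopologicalSpace Y] [CompactSpace Y] [T2Space Y]
    {T : Y → Y} (hT : IsMinimalMap T) (hc : Continuous T) {i : Y → ℝ} (hi : Continuous i)
    (hinj : Function.Injective i) :
    Finite Y ∨ (TotallyDisconnectedSpace Y ∧ NoIsolatedPoints Y) := by
  by_cases hfin : Finite Y
  · exact Or.inl hfin
  right
  have hnp : ∀ n > 0, ∀ y, T^[n] y ≠ y := fun n hn y hy => hfin (hT.finite_of_periodic hn hy)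
  refine ⟨?_, fun y hy => ?_⟩
  · rw [totallyDisconnectedSpace_iff_connectedComponent_subsingleton]
    intro x
    by_contra hns
    rw [not_subsingleton_iff] at hns
    set C := connectedComponent x with hC
    have hCp : IsPreconnected C := isPreconnected_connectedComponent
    have hCk : IsCompact C := isClosed_connectedComponent.isCompact
    obtain ⟨a, ha, hamin⟩ := hCk.exists_isMinOn hns.nonempty hi.continuousOn
    obtain ⟨b, hb, hbmax⟩ := hCk.exists_isMaxOn hns.nonempty hi.continuousOn
    have hab : i a < i b := by
      obtain ⟨c, hcC, d, hd, hcd⟩ := hns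
      have hne : i c ≠ i d := fun h => hcd (hinj h)
      have h1 : i a ≤ i c := hamin hcC
      have h2 : i a ≤ i d := hamin hd
      have h3 : i c ≤ i b := hbmax hcC
      have h4 : i d ≤ i b := hbmax hd
      rcases hne.lt_or_gt with h | h <;> linarith
    have hIcc : Icc (i a) (i b) ⊆ i '' C :=
      (hCp.image i hi.continuousOn).ordConnected.out ⟨a, ha, rfl⟩ ⟨b, hb, rfl⟩
    have hUC : i ⁻¹' Ioo (i a) (i b) ⊆ C := by
      intro y hy
      obtain ⟨c, hcC, hcy⟩ := hIcc (Ioo_subset_Icc_self hy)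
      rwa [← hinj hcy]
    obtain ⟨t, ht⟩ := nonempty_Ioo.2 hab
    obtain ⟨y, hyC, rfl⟩ := hIcc (Ioo_subset_Icc_self ht)
    obtain ⟨n, hn, hret⟩ := hT.exists_iterate_mem hc (isOpen_Ioo.preimage hi) ⟨y, ht⟩ y
    have hTn : Continuous (T^[n]) := hc.iterate n
    have hTC : ∀ c ∈ C, T^[n] c ∈ C := by
      have h1 := (hCp.image _ hTn.continuousOn).subset_connectedComponent
        (mem_image_of_mem _ hyC)
      have h2 : connectedComponent (T^[n] y) = C := (connectedComponent_eq (hUC hret)).symm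
      rw [h2] at h1
      exact fun c hcC => h1 (mem_image_of_mem _ hcC)
    -- As `T^[n]` maps the interval `C` into itself, it has a fixed point there.
    obtain ⟨c, -, hfix⟩ := hCp.intermediate_value₂ ha hb hi.continuousOn
      (hi.comp hTn).continuousOn (hamin (hTC a ha)) (hbmax (hTC b hb))
    exact hnp n hn c (hinj hfix.symm)
  · obtain ⟨n, hn, h⟩ := hT.exists_iterate_mem hc hy (singleton_nonempty y) y
    exact hnp n hn y h

theorem MinimalSystemOn.isMinimalMap {X : Type*} [TopologicalSpace X] [T2Space X] {M : Set X}
    (hM : IsCompact M) {F : X → X} (h : MinimalSystemOn F M) (hF : MapsTo F M M) :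
    IsMinimalMap (hF.restrict F M M) := by
  intro N hne hcl hinv
  have : CompactSpace M := isCompact_iff_compactSpace.1 hM
  have h1 := h.2.2 (Subtype.val '' N) (Subtype.coe_image_subset M N) (hne.image _)
    (hcl.isCompact.image continuous_subtype_val).isClosed (by
      rintro _ ⟨_, ⟨z, hz, rfl⟩, rfl⟩
      exact ⟨_, hinv hz, rfl⟩)
  apply Subtype.val_injective.image_injective
  rw [h1, image_univ, Subtype.range_coe]

theorem IsMinimalMap.minimalSystemOn {X : Type*} [TopologicalSpace X] [T2Space X] {M : Set X}
    (hM : IsCompact M) (hne : M.Nonempty) {T : M → M} (hT : IsMinimalMap T) (hc : Continuous T)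
    {F : X → X} (hF : ∀ x : M, F x = T x) : MinimalSystemOn F M := by
  have : CompactSpace M := isCompact_iff_compactSpace.1 hM
  have : Nonempty M := hne.to_subtype
  refine ⟨hne, ?_, fun N hN hNne hNcl hinv => ?_⟩
  · have h1 : range T = univ := hT _ (range_nonempty T) (isCompact_range hc).isClosed
      fun x _ => mem_range_self x
    ext x
    constructor
    · rintro ⟨y, hy, rfl⟩
      rw [hF ⟨y, hy⟩]
      exact (T _).2
    · intro hx
      obtain ⟨y, hy⟩ := (h1 ▸ mem_univ (⟨x, hx⟩ : M) : (⟨x, hx⟩ : M) ∈ range T)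
      exact ⟨y, y.2, by rw [hF, hy]⟩
  · have h1 : (Subtype.val ⁻¹' N : Set M) = univ := by
      refine hT _ ?_ (hNcl.preimage continuous_subtype_val) fun z hz => ?_
      · obtain ⟨x, hx⟩ := hNne
        exact ⟨⟨x, hN hx⟩, hx⟩
      · rw [mem_preimage, ← hF]
        exact hinv ⟨z, hz, rfl⟩
    refine hN.antisymm fun x hx => ?_
    have : (⟨x, hx⟩ : M) ∈ (Subtype.val ⁻¹' N : Set M) := h1 ▸ mem_univ _
    exact this

/-- A cyclic permutation is minimal. -/
theorem exists_minimal_of_finite (Y : Type*) [TopologicalSpace Y] [T1Space Y] [Finite Y]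
    [Nonempty Y] : ∃ T : Y → Y, Continuous T ∧ IsMinimalMap T := by
  obtain ⟨n, ⟨e'⟩⟩ := Finite.exists_equiv_fin Y
  obtain ⟨k, rfl⟩ : ∃ k, n = k + 1 := by
    refine Nat.exists_eq_succ_of_ne_zero ?_
    rintro rfl
    exact (e' (Classical.arbitrary Y)).elim0
  let e : Y ≃ ZMod (k + 1) := e'
  refine ⟨fun x => e.symm (e x + 1), continuous_of_discreteTopology, fun N hne _ hinv => ?_⟩
  obtain ⟨x, hx⟩ := hne
  have h : ∀ j : ℕ, e.symm (e x + (j : ZMod (k + 1))) ∈ N := by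
    intro j
    induction j with
    | zero => simpa using hx
    | succ j ih => simpa [add_assoc] using hinv ih
  refine eq_univ_of_forall fun y => ?_
  simpa using h (e y - e x).val

end MinimalMaps

/-! ### The adding machine -/

section Odometer

/-- A nonempty clopen set `U` splits into two nonempty clopen pieces, on each of which membership in
`B` is constant: cut along `B` if `B` splits `U`, and arbitrarily otherwise. -/
theorem exists_clopen_split {Y : Type*} [TopologicalSpace Y] [TotallySeparatedSpace Y]
    (hY : NoIsolatedPoints Y) {U B : Set Y} (hU : IsClopen U) (hne : U.Nonempty)
    (hB : IsClopen B) :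
    ∃ S, IsClopen S ∧ (U ∩ S).Nonempty ∧ (U \ S).Nonempty ∧
      ∀ y ∈ U, ∀ y' ∈ U, (y ∈ S ↔ y' ∈ S) → (y ∈ B ↔ y' ∈ B) := by
  by_cases h : (U ∩ B).Nonempty ∧ (U \ B).Nonempty
  · exact ⟨B, hB, h.1, h.2, fun _ _ _ _ h => h⟩
  have hconst : ∀ y ∈ U, ∀ y' ∈ U, (y ∈ B ↔ y' ∈ B) := by
    have key : ∀ y ∈ U, ∀ y' ∈ U, y ∈ B → y' ∈ B := fun y hy y' hy' hyB => by
      by_contra hcon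
      exact h ⟨⟨y, hy, hyB⟩, ⟨y', hy', hcon⟩⟩
    exact fun y hy y' hy' => ⟨key y hy y' hy', key y' hy' y hy⟩
  obtain ⟨x, hx⟩ := hne
  obtain ⟨y, hy, hxy⟩ : ∃ y ∈ U, x ≠ y := by
    by_contra! hcon
    refine hY x ?_
    have : ({x} : Set Y) = U :=
      Subset.antisymm (singleton_subset_iff.2 hx) fun y hy => (hcon y hy).symm
    rw [this]
    exact hU.isOpen
  obtain ⟨S, hS, hxS, hyS⟩ := exists_isClopen_of_totally_separated hxy
  exact ⟨S, hS, ⟨x, hx, hxS⟩, ⟨y, hy, hyS⟩, fun y hy y' hy' _ => hconst y hy y' hy'⟩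

/-- A Cantor space has a refining sequence of clopen partitions, the `n`-th one having exactly
`2 ^ n` pieces, such that the piece `k` is the union of the pieces `k` and `k + 2 ^ n` of the next
partition; `π n` sends a point to the label of its piece. -/
theorem exists_dyadic_partitions {Y : Type*} [TopologicalSpace Y] [TotallySeparatedSpace Y]
    [Nonempty Y] (hY : NoIsolatedPoints Y) {B : ℕ → Set Y} (hB : ∀ n, IsClopen (B n)) :
    ∃ π : ℕ → Y → ℕ, ∀ n, (Continuous (π n) ∧ (∀ y, π n y < 2 ^ n) ∧ ∀ k < 2 ^ n, ∃ y, π n y = k) ∧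
      (∀ y, π (n + 1) y % 2 ^ n = π n y) ∧
      ∀ y y', π (n + 1) y = π (n + 1) y' → (y ∈ B n ↔ y' ∈ B n) := by
  classical
  obtain ⟨π, -, hπ⟩ := exists_dependent_seq
    (G := fun n (p : Y → ℕ) => Continuous p ∧ (∀ y, p y < 2 ^ n) ∧ ∀ k < 2 ^ n, ∃ y, p y = k)
    (R := fun n p p' => (∀ y, p' y % 2 ^ n = p y) ∧ ∀ y y', p' y = p' y' → (y ∈ B n ↔ y' ∈ B n))
    (a := fun _ => 0) ⟨continuous_const, by simp, fun k hk => ⟨Classical.arbitrary Y, by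
      simp only [pow_zero, Nat.lt_one_iff] at hk
      exact hk.symm⟩⟩ (by
    rintro n p ⟨hpc, hplt, hps⟩
    have hfib : ∀ k, IsClopen (p ⁻¹' {k}) := fun k => (isClopen_discrete {k}).preimage hpc
    have hex : ∀ k, ∃ S, IsClopen S ∧ (k < 2 ^ n → (p ⁻¹' {k} ∩ S).Nonempty ∧
        (p ⁻¹' {k} \ S).Nonempty ∧ ∀ y ∈ p ⁻¹' {k}, ∀ y' ∈ p ⁻¹' {k},
          (y ∈ S ↔ y' ∈ S) → (y ∈ B n ↔ y' ∈ B n)) := fun k => by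
      by_cases hk : k < 2 ^ n
      · obtain ⟨S, h1, h2⟩ := exists_clopen_split hY (hfib k) (hps k hk) (hB n)
        exact ⟨S, h1, fun _ => h2⟩
      · exact ⟨∅, isClopen_empty, fun h => absurd h hk⟩
    choose S hS hS' using hex
    let p' : Y → ℕ := fun y => if y ∈ S (p y) then p y else p y + 2 ^ n
    have hmod : ∀ y, p' y % 2 ^ n = p y := fun y => by
      simp only [p']
      split_ifs
      · exact Nat.mod_eq_of_lt (hplt y)
      · rw [Nat.add_mod_right, Nat.mod_eq_of_lt (hplt y)]
    have hmem : ∀ y, y ∈ S (p y) ↔ p' y < 2 ^ n := fun y => by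
      by_cases h : y ∈ S (p y) <;> simp [p', h, hplt y]
    refine ⟨p', ⟨?_, fun y => ?_, fun k hk => ?_⟩, hmod, fun y y' hyy => ?_⟩
    · rw [← IsLocallyConstant.iff_continuous, IsLocallyConstant.iff_eventually_eq]
      intro y
      have h1 : ∀ᶠ z in 𝓝 y, p z = p y :=
        (IsLocallyConstant.iff_eventually_eq p).1 ((IsLocallyConstant.iff_continuous p).2 hpc) y
      have h2 : ∀ᶠ z in 𝓝 y, (z ∈ S (p y) ↔ y ∈ S (p y)) := by
        by_cases h : y ∈ S (p y)
        · filter_upwards [(hS (p y)).isOpen.mem_nhds h] with z hz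
          exact iff_of_true hz h
        · filter_upwards [(hS (p y)).compl.isOpen.mem_nhds h] with z hz
          exact iff_of_false hz h
      filter_upwards [h1, h2] with z hz1 hz2
      simp only [p', hz1, hz2]
    · have := hplt y
      rw [pow_succ]
      simp only [p']
      split_ifs <;> omega
    · rw [pow_succ] at hk
      by_cases hk' : k < 2 ^ n
      · obtain ⟨y, hyk, hyS⟩ := (hS' k hk').1
        rw [mem_preimage, mem_singleton_iff] at hyk
        exact ⟨y, by simp [p', hyk, hyS]⟩
      · obtain ⟨y, hyk, hyS⟩ := (hS' (k - 2 ^ n) (by omega)).2.1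
        rw [mem_preimage, mem_singleton_iff] at hyk
        refine ⟨y, ?_⟩
        simp only [p', hyk, if_neg hyS]
        omega
    · have hp : p y = p y' := by rw [← hmod, hyy, hmod]
      refine (hS' (p y) (hplt y)).2.2 y rfl y' hp.symm ?_
      rw [hmem y, hyy, ← hmem y', hp])
  exact ⟨π, fun n => ⟨(hπ n).1, (hπ n).2⟩⟩

/-- A Cantor space carries a minimal map, namely the dyadic adding machine. -/
theorem exists_minimal_of_cantor (Y : Type*) [TopologicalSpace Y] [CompactSpace Y] [T2Space Y]
    [SecondCountableTopology Y] [TotallyDisconnectedSpace Y] [Nonempty Y]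
    (hY : NoIsolatedPoints Y) : ∃ T : Y → Y, Continuous T ∧ IsMinimalMap T := by
  have hcount : Countable (TopologicalSpace.Clopens Y) :=
    TopologicalSpace.Clopens.countable_iff_secondCountable.2 inferInstance
  obtain ⟨B, hB⟩ := exists_surjective_nat (TopologicalSpace.Clopens Y)
  obtain ⟨π, hπ⟩ := exists_dyadic_partitions hY (B := fun n => B n) fun n => (B n).isClopen
  have hc : ∀ n, Continuous (π n) := fun n => (hπ n).1.1
  have hlt : ∀ n y, π n y < 2 ^ n := fun n => (hπ n).1.2.1
  have hmod : ∀ n y, π (n + 1) y % 2 ^ n = π n y := fun n => (hπ n).2.1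
  have hsep : ∀ x y, (∀ n, π n x = π n y) → x = y := by
    intro x y h
    by_contra hxy
    obtain ⟨S, hS, hxS, hyS⟩ := exists_isClopen_of_totally_separated hxy
    obtain ⟨n, hn⟩ := hB ⟨S, hS⟩
    have h1 := (hπ n).2.2 x y (h (n + 1))
    rw [hn] at h1
    exact hyS (h1.1 hxS)
  have hcl : ∀ n k, IsClosed {y | π n y = k} := fun n k => isClosed_eq (hc n) continuous_const
  -- The conditions on `y` are compatible because reduction mod `2 ^ n` commutes with adding one, so
  -- they define nested nonempty compact sets.
  have hT : ∀ x, ∃ y, ∀ n, π n y = (π n x + 1) % 2 ^ n := by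
    intro x
    obtain ⟨y, hy⟩ := IsCompact.nonempty_iInter_of_sequence_nonempty_isCompact_isClosed
      (fun n => {y | π n y = (π n x + 1) % 2 ^ n}) (fun n y hy => by
        simp only [mem_ofPred_eq] at hy ⊢
        rw [← hmod n y, hy, Nat.mod_mod_of_dvd _ (pow_dvd_pow 2 n.le_succ), Nat.add_mod,
          hmod n x, ← Nat.add_mod_mod, ← hmod n x, Nat.mod_mod]
        simp)
      (fun n => (hπ n).1.2.2 _ (Nat.mod_lt _ (by positivity)))
      (hcl _ _).isCompact (fun n => hcl _ _)
    exact ⟨y, fun n => mem_iInter.1 hy n⟩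
  choose T hT using hT
  refine ⟨T, ?_, ?_⟩
  · have hemb : IsClosedEmbedding (fun y n => π n y) :=
      (continuous_pi hc).isClosedEmbedding fun x y h => hsep x y fun n => congrFun h n
    rw [hemb.isInducing.continuous_iff]
    refine continuous_pi fun n => ?_
    have : (fun x => π n (T x)) = (fun k => (k + 1) % 2 ^ n) ∘ π n := funext fun x => hT x n
    change Continuous fun x => π n (T x)
    rw [this]
    exact continuous_of_discreteTopology.comp (hc n)
  · intro N hne hNcl hinv
    refine eq_univ_of_forall fun y => ?_
    have hit : ∀ n j x, π n (T^[j] x) = (π n x + j) % 2 ^ n := by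
      intro n j x
      induction j with
      | zero => simp [Nat.mod_eq_of_lt (hlt n x)]
      | succ j ih => rw [Function.iterate_succ_apply', hT, ih, Nat.mod_add_mod, add_assoc]
    obtain ⟨x, hx⟩ := hne
    obtain ⟨z, hz⟩ := IsCompact.nonempty_iInter_of_sequence_nonempty_isCompact_isClosed
      (fun n => N ∩ {z | π n z = π n y}) (fun n z hz => by
        refine ⟨hz.1, ?_⟩
        have h := hz.2
        simp only [mem_ofPred_eq] at h ⊢
        rw [← hmod, h, hmod])
      (fun n => by
        -- The `n`-th label runs through the residues mod `2 ^ n`, one step at a time.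
        refine ⟨T^[π n y + (2 ^ n - π n x)] x, hinv.iterate _ hx, ?_⟩
        have h1 := hlt n x
        have h2 : π n x + (π n y + (2 ^ n - π n x)) = π n y + 2 ^ n := by omega
        rw [mem_ofPred_eq, hit, h2, Nat.add_mod_right, Nat.mod_eq_of_lt (hlt n y)])
      (hNcl.inter (hcl _ _)).isCompact (fun n => hNcl.inter (hcl _ _))
    rw [mem_iInter] at hz
    rw [← hsep z y fun n => (hz n).2]
    exact (hz 0).1

end Odometer

/-! ### The minimal sets of the space -/

/-- A compact subset of the free interval is in `𝓜(J)` as soon as it carries a minimal map. -/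
theorem mem_MSetIn_of_isMinimalMap {X : Type*} [TopologicalSpace X] [CompactSpace X] [T2Space X]
    {q : ℝ → X} (hq : IsOpenEmbedding q) {M : Set X} (hM : IsCompact M) (hne : M.Nonempty)
    (hMq : M ⊆ range q) {T : M → M} (hc : Continuous T) (hT : IsMinimalMap T) :
    M ∈ MSetIn (range q) := by
  classical
  let F : X → X := fun x => if h : x ∈ M then T ⟨x, h⟩ else x
  have hF : ∀ x : M, F x = T x := fun x => by simp [F]
  have hFc : ContinuousOn F M := by
    rw [continuousOn_iff_continuous_domRestrict]
    have : M.domRestrict F = fun x => (T x : X) := funext hF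
    rw [this]
    fun_prop
  obtain ⟨G, hGc, hGq, hGF⟩ := exists_extension hq hM hFc fun x hx => by
    rw [hF ⟨x, hx⟩]
    exact hMq (T _).2
  exact mem_MSetIn_iff.2 ⟨hMq, hM, G, hGc.continuousOn, fun x _ => hGq x,
    hT.minimalSystemOn hM hne hc fun x => (hGF x.2).trans (hF x)⟩

/-- The minimal sets of the free interval are its finite subsets and its Cantor subsets. -/
theorem MSetIn_interval {X : Type*} [TopologicalSpace X] [CompactSpace X]
    [TopologicalSpace.MetrizableSpace X] {q : ℝ → X} (hq : IsOpenEmbedding q) :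
    MSetIn (range q) =
      {M : Set X | M ⊆ range q ∧ ((M.Finite ∧ M.Nonempty) ∨ IsCantorSet M)} := by
  ext M
  constructor
  · intro h
    obtain ⟨hMq, hM, F, hFc, -, hmin⟩ := mem_MSetIn_iff.1 h
    refine ⟨hMq, ?_⟩
    have hFM : MapsTo F M M := fun x hx => hmin.2.1 ▸ mem_image_of_mem F hx
    have : CompactSpace M := isCompact_iff_compactSpace.1 hM
    let e := hq.isEmbedding.toHomeomorph
    rcases (hmin.isMinimalMap hM hFM).finite_or_cantor ((hFc.mono hMq).mapsToRestrict hFM)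
      (e.symm.continuous.comp (continuous_inclusion hMq))
      (e.symm.injective.comp (inclusion_injective hMq)) with h | ⟨h1, h2⟩
    · exact Or.inl ⟨toFinite M, hmin.1⟩
    · exact Or.inr ⟨hmin.1, hM, totallyDisconnectedSpace_subtype_iff.1 h1, h2⟩
  · rintro ⟨hMq, ⟨hfin, hne⟩ | ⟨hne, hM, htd, hiso⟩⟩
    · have : Finite M := hfin
      have : Nonempty M := hne.to_subtype
      obtain ⟨T, hc, hT⟩ := exists_minimal_of_finite M
      exact mem_MSetIn_of_isMinimalMap hq hfin.isCompact hne hMq hc hT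
    · have : CompactSpace M := isCompact_iff_compactSpace.1 hM
      have : Nonempty M := hne.to_subtype
      have : TotallyDisconnectedSpace M := totallyDisconnectedSpace_subtype_iff.2 htd
      let _ := TopologicalSpace.metrizableSpaceMetric X
      obtain ⟨T, hc, hT⟩ := exists_minimal_of_cantor M hiso
      exact mem_MSetIn_of_isMinimalMap hq hM hne hMq hc hT

/-- If `X = L ∪ J ∪ R ∈ 𝒞`, `L, R` nondegenerate, `L ∩ R ≠ ∅`, then `𝓜(X)` is
the disjoint union of `𝓜(L ∪ R)` and `𝓜(J)`, and `𝓜(J)` is the system of all nonempty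
finite sets and Cantor sets contained in `J`. -/
theorem stmt2 {X : Type*} [TopologicalSpace X] [CompactSpace X] [ConnectedSpace X]
    [TopologicalSpace.MetrizableSpace X] {L J R : Set X} (hC : ClassC L J R)
    (hL : L.Nontrivial) (hR : R.Nontrivial) (hLR : (L ∩ R).Nonempty) :
    MSpace X = MSetIn (L ∪ R) ∪ MSetIn J ∧
    Disjoint (MSetIn (L ∪ R)) (MSetIn J) ∧
    MSetIn J = {M : Set X | M ⊆ J ∧ ((M.Finite ∧ M.Nonempty) ∨ IsCantorSet M)} := by
  obtain ⟨q, hq, rfl, hqL, hqR⟩ := hC.exists_coordinates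
  have := hC.locConnL
  have := hC.locConnR
  have hcov : ∀ x, x ∈ range q ∨ x ∈ L ∪ R := fun x => by
    have h : x ∈ L ∪ range q ∪ R := hC.union_eq ▸ mem_univ x
    rcases h with (h | h) | h
    · exact Or.inr (Or.inl h)
    · exact Or.inl h
    · exact Or.inr (Or.inr h)
  have hdis : Disjoint (L ∪ R) (range q) := hC.disjLJ.union_left hC.disjRJ
  refine ⟨?_, ?_, MSetIn_interval hq⟩
  · obtain ⟨r, hrc, hrK, hr⟩ := exists_retraction hq hqL hqR hC.compactL hC.connL hC.compactR
      hC.connR hcov hdis hLR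
    apply Subset.antisymm
    · rintro M ⟨hM, f, hf, hmin⟩
      have hfM : MapsTo f M M := fun x hx => hmin.2.1 ▸ mem_image_of_mem f hx
      rcases minimal_dichotomy hq hqL hqR hL hR hC.connL hC.connR hcov hdis hLR hC.denseJ hf hM
        hmin with h | h
      · right
        obtain ⟨G, hGc, hGq, hGf⟩ := exists_extension hq hM hf.continuousOn
          fun x hx => h (hfM hx)
        exact mem_MSetIn_iff.2 ⟨h, hM, G, hGc.continuousOn, fun x _ => hGq x,
          hmin.congr hGf.symm⟩
      · left
        exact mem_MSetIn_iff.2 ⟨h, hM, r ∘ f, (hrc.comp hf).continuousOn, fun x _ => hrK _,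
          hmin.congr fun x hx => (hr _ (h (hfM hx))).symm⟩
    · rintro M (h | h)
      · obtain ⟨hMK, hM, F, hFc, hFK, hmin⟩ := mem_MSetIn_iff.1 h
        exact ⟨hM, F ∘ r, hFc.comp_continuous hrc hrK,
          hmin.congr fun x hx => (congrArg F (hr x (hMK hx))).symm⟩
      · obtain ⟨hMJ, hM, F, hFc, hFJ, hmin⟩ := mem_MSetIn_iff.1 h
        obtain ⟨G, hGc, -, hGF⟩ := exists_extension hq hM (hFc.mono hMJ) (hFJ.mono_left hMJ)
        exact ⟨hM, G, hGc, hmin.congr hGF.symm⟩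
  · rw [disjoint_left]
    intro M hK hJ
    obtain ⟨hMK, -, F, -, -, hne, -⟩ := mem_MSetIn_iff.1 hK
    obtain ⟨x, hx⟩ := hne
    exact disjoint_left.1 hdis (hMK hx) ((mem_MSetIn_iff.1 hJ).1 hx)
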